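/- Let q be a braiding matrix with connected Dynkin diagram such that B_q is finite dimensional, and let B be a pre-Nichols algebra of q with finite GKdim. Let i,j,k ∈ I_θ be such that q̃_{jk} = 1 and q_{ii} = q̃_{ij} = −q̃_{ik} ∈ G_3'. Then [x_i, [x_{ij}, x_{ik}]_c]_c = −q_{jk} q_{ik} q_{ji} [x_{iik}, x_{ij}]_c − q_{ij} x_{ij} x_{iik} in B. -/

import Mathlib

/-
Common framework for formalizing statements from
"Finite GK-dimensional pre-Nichols algebras of (super)modular and unidentified type"
(Angiono, Campagnolo, Sanmarco).

We work over `ℂ` (an algebraically closed field of characteristic zero).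
A braiding matrix is `q : Fin θ → Fin θ → ℂˣ`.  The tensor algebra `T(V)` of the
associated braided vector space of diagonal type is realized as the free algebra
on `Fin θ`.  The braided bialgebra structure on `T(V)` (the braided coproduct,
uniquely determined by the braiding matrix) is packaged in the structure
`BraidedStr`: its fields characterize it uniquely, so quantifying over
`S : BraidedStr θ q` is equivalent to using "the" braided coproduct.

A pre-Nichols algebra of `q` is the quotient `T(V)/I` by an ℕ₀-homogeneous
(two-sided) braided bi-ideal `I` generated in degrees ≥ 2 (`IsPreNicholsIdeal`);
such an ideal is automatically contained in the defining ideal `Jq` of the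
Nichols algebra, which is the largest such ideal.  A statement
"`x = 0` holds in the pre-Nichols algebra `T(V)/I`" is formalized as `x ∈ I`.
-/

open scoped TensorProduct

noncomputable section

namespace PreNicholsPaper

/-- The tensor algebra `T(V)` of the braided vector space of diagonal type of rank `θ`. -/
abbrev TV (θ : ℕ) := FreeAlgebra ℂ (Fin θ)

/-- The generator `x_i` of `T(V)`. -/
def gen (θ : ℕ) (i : Fin θ) : TV θ := FreeAlgebra.ι ℂ i

/-- The monomial `x_{i_1} ⋯ x_{i_n}` associated to a word. -/
def wordElem (θ : ℕ) (w : List (Fin θ)) : TV θ := (w.map (gen θ)).prod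

/-- The multidegree in `ℕ₀^θ` of a word. -/
def degW (θ : ℕ) (w : List (Fin θ)) : Fin θ → ℕ := fun i => w.count i

/-- `α_i`, the `i`-th canonical basis vector of `ℕ₀^θ`. -/
def δ (θ : ℕ) (i : Fin θ) : Fin θ → ℕ := fun k => if k = i then 1 else 0

/-- The bilinear form `ℕ₀^θ × ℕ₀^θ → ℂˣ` attached to the braiding matrix,
`q(α_i, α_j) = q_{ij}`, evaluated in `ℂ`. -/
def qf {θ : ℕ} (q : Fin θ → Fin θ → ℂˣ) (a b : Fin θ → ℕ) : ℂ :=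
  ∏ i : Fin θ, ∏ j : Fin θ, (q i j : ℂ) ^ (a i * b j)

/-- `q̃_{ij} = q_{ij} q_{ji}`. -/
def qtil {θ : ℕ} (q : Fin θ → Fin θ → ℂˣ) (i j : Fin θ) : ℂ := (q i j : ℂ) * (q j i : ℂ)

/-- The braided commutator `[u,v]_c = uv - q(a,b) vu` of elements `u, v`
which are homogeneous of multidegrees `a`, `b` respectively. -/
def brk {θ : ℕ} (q : Fin θ → Fin θ → ℂˣ) (a b : Fin θ → ℕ) (u v : TV θ) : TV θ :=
  u * v - qf q a b • (v * u)

/-- `(ad_c x_i) y = x_i y - q(α_i, b) y x_i` for `y` homogeneous of multidegree `b`. -/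
def ad1 {θ : ℕ} (q : Fin θ → Fin θ → ℂˣ) (i : Fin θ) (b : Fin θ → ℕ) (y : TV θ) : TV θ :=
  brk q (δ θ i) b (gen θ i) y

/-- The iterated braided adjoint `x_{i_1 i_2 ⋯ i_k} = (ad_c x_{i_1}) x_{i_2 ⋯ i_k}`. -/
def xw {θ : ℕ} (q : Fin θ → Fin θ → ℂˣ) : List (Fin θ) → TV θ
  | [] => 1
  | [i] => gen θ i
  | i :: w => ad1 q i (degW θ w) (xw q w)

/-- `(ad_c x_i)^m x_j`. -/
def adpow {θ : ℕ} (q : Fin θ → Fin θ → ℂˣ) (i j : Fin θ) : ℕ → TV θ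
  | 0 => gen θ j
  | m + 1 => ad1 q i (fun k => m * δ θ i k + δ θ j k) (adpow q i j m)

/-- The homogeneous component of total degree `n` of `T(V)`. -/
def homogTot (θ : ℕ) (n : ℕ) : Submodule ℂ (TV θ) :=
  Submodule.span ℂ {x | ∃ w : List (Fin θ), w.length = n ∧ x = wordElem θ w}

/-- The homogeneous component of multidegree `d ∈ ℕ₀^θ` of `T(V)`. -/
def homogD (θ : ℕ) (d : Fin θ → ℕ) : Submodule ℂ (TV θ) :=
  Submodule.span ℂ {x | ∃ w : List (Fin θ), degW θ w = d ∧ x = wordElem θ w}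

/-- The braided bialgebra structure on `T(V)` determined by the braiding matrix `q`:
the braided coproduct `Δ` together with the multiplication `mulB` of the braided
tensor product `T(V) ⊗ T(V)`.  These axioms determine `Δ` and `mulB` uniquely. -/
structure BraidedStr (θ : ℕ) (q : Fin θ → Fin θ → ℂˣ) where
  Δ : TV θ →ₗ[ℂ] TensorProduct ℂ (TV θ) (TV θ)
  mulB : TensorProduct ℂ (TV θ) (TV θ) →ₗ[ℂ]
    TensorProduct ℂ (TV θ) (TV θ) →ₗ[ℂ] TensorProduct ℂ (TV θ) (TV θ)
  mulB_spec : ∀ (a d : TV θ) (wb wc : List (Fin θ)),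
    mulB (a ⊗ₜ[ℂ] wordElem θ wb) (wordElem θ wc ⊗ₜ[ℂ] d)
      = qf q (degW θ wb) (degW θ wc) • ((a * wordElem θ wc) ⊗ₜ[ℂ] (wordElem θ wb * d))
  Δ_one : Δ 1 = 1 ⊗ₜ[ℂ] 1
  Δ_gen : ∀ i, Δ (gen θ i) = gen θ i ⊗ₜ[ℂ] 1 + 1 ⊗ₜ[ℂ] gen θ i
  Δ_mul : ∀ u v : TV θ, Δ (u * v) = mulB (Δ u) (Δ v)

variable {θ : ℕ} {q : Fin θ → Fin θ → ℂˣ}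

/-- `x` is a primitive element. -/
def IsPrimitiveIn (S : BraidedStr θ q) (x : TV θ) : Prop :=
  S.Δ x = x ⊗ₜ[ℂ] (1 : TV θ) + (1 : TV θ) ⊗ₜ[ℂ] x

/-- The submodule `I ⊗ T(V) + T(V) ⊗ J` of `T(V) ⊗ T(V)`. -/
def mixedPair (I J : Submodule ℂ (TV θ)) : Submodule ℂ (TensorProduct ℂ (TV θ) (TV θ)) :=
  Submodule.span ℂ
    ({x | ∃ a b : TV θ, a ∈ I ∧ x = a ⊗ₜ[ℂ] b} ∪ {x | ∃ a b : TV θ, b ∈ J ∧ x = a ⊗ₜ[ℂ] b})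

/-- The submodule `I ⊗ T(V) + T(V) ⊗ I` of `T(V) ⊗ T(V)`. -/
def mixedSub (I : Submodule ℂ (TV θ)) : Submodule ℂ (TensorProduct ℂ (TV θ) (TV θ)) :=
  mixedPair I I

/-- `I` is the defining ideal of a pre-Nichols algebra of `q`：an ℕ₀-homogeneous
two-sided (bi-)ideal of `T(V)` generated in degrees `≥ 2` which is also a coideal.
Such an ideal is automatically contained in the defining ideal `Jq` of the Nichols
algebra, and the pre-Nichols algebra is the quotient `T(V)/I`. -/
structure IsPreNicholsIdeal (S : BraidedStr θ q) (I : Submodule ℂ (TV θ)) : Prop where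
  mul_left : ∀ a x : TV θ, x ∈ I → a * x ∈ I
  mul_right : ∀ a x : TV θ, x ∈ I → x * a ∈ I
  homog_ge2 : I = Submodule.span ℂ {x | x ∈ I ∧ ∃ n, 2 ≤ n ∧ x ∈ homogTot θ n}
  coideal : ∀ x ∈ I, S.Δ x ∈ mixedSub I

/-- The defining ideal `J_q` of the Nichols algebra `B_q = T(V)/J_q`:
the maximal homogeneous braided Hopf ideal generated in degrees `≥ 2`. -/
def Jq (S : BraidedStr θ q) : Submodule ℂ (TV θ) := sSup {I | IsPreNicholsIdeal S I}

/-- The standard filtration of `T(V)`: span of words of length `≤ n`. -/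
def Wfil (θ : ℕ) (n : ℕ) : Submodule ℂ (TV θ) :=
  Submodule.span ℂ {x | ∃ w : List (Fin θ), w.length ≤ n ∧ x = wordElem θ w}

/-- The quotient algebra `T(V)/I` has finite Gelfand–Kirillov dimension, i.e.
the standard filtration of the (finitely generated) quotient has polynomial growth. -/
def FinGK (I : Submodule ℂ (TV θ)) : Prop :=
  ∃ C d : ℕ, ∀ n : ℕ, Module.finrank ℂ ((Wfil θ n).map I.mkQ) ≤ C * (n + 1) ^ d

/-- The Gelfand–Kirillov dimension of the quotient algebra `T(V)/I`. -/
def GKdim (I : Submodule ℂ (TV θ)) : ℝ :=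
  Filter.limsup
    (fun n : ℕ => Real.log (Module.finrank ℂ ((Wfil θ n).map I.mkQ)) / Real.log n)
    Filter.atTop

/-- `I` defines an eminent pre-Nichols algebra: it is a finite-GKdim pre-Nichols
algebra, and every finite-GKdim pre-Nichols algebra of `q` is a quotient of it. -/
def IsEminent (S : BraidedStr θ q) (I : Submodule ℂ (TV θ)) : Prop :=
  IsPreNicholsIdeal S I ∧ FinGK I ∧
    ∀ I' : Submodule ℂ (TV θ), IsPreNicholsIdeal S I' → FinGK I' → I ≤ I'

/-- The Dynkin diagram of the braiding matrix `q`: vertices `Fin θ`, an edge between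
`i ≠ j` iff `q̃_{ij} ≠ 1`. -/
def dynkin {θ : ℕ} (q : Fin θ → Fin θ → ℂˣ) : SimpleGraph (Fin θ) :=
  SimpleGraph.fromRel (fun i j => qtil q i j ≠ 1)

/-- The quantum number `(m)_t = 1 + t + ⋯ + t^{m-1}`. -/
def qnum (t : ℂ) (m : ℕ) : ℂ := ∑ k ∈ Finset.range m, t ^ k

/-- The set of `n ∈ ℕ₀` such that `(n+1)_{q_{ii}} (1 - q_{ii}^n q̃_{ij}) = 0`,
i.e. such that `(ad_c x_i)^{n+1} x_j = 0` in the Nichols algebra.  The entry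
`c_{ij}` of the generalized Cartan matrix is `-(min of this set)`. -/
def cSet {θ : ℕ} (q : Fin θ → Fin θ → ℂˣ) (i j : Fin θ) : Set ℕ :=
  {n | qnum (q i i : ℂ) (n + 1) * (1 - (q i i : ℂ) ^ n * qtil q i j) = 0}

/-- The generalized Cartan matrix of `q`. -/
def cij {θ : ℕ} (q : Fin θ → Fin θ → ℂˣ) (i j : Fin θ) : ℤ :=
  if i = j then 2 else -(Int.ofNat (sInf (cSet q i j)))

/-- All entries `c_{ij}` are defined at the vertex `i`. -/
def reflectable {θ : ℕ} (q : Fin θ → Fin θ → ℂˣ) (i : Fin θ) : Prop :=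
  ∀ j, j ≠ i → (cSet q i j).Nonempty

/-- The `i`-th reflection of the braiding matrix:
`(r_i q)_{jk} = q(s_i α_j, s_i α_k)` where `s_i α_j = α_j - c_{ij} α_i`. -/
def reflectMat {θ : ℕ} (q : Fin θ → Fin θ → ℂˣ) (i : Fin θ) : Fin θ → Fin θ → ℂˣ :=
  fun j k =>
    q j k * q j i ^ (-(cij q i k)) * q i k ^ (-(cij q i j)) * q i i ^ (cij q i j * cij q i k)

/-- The reflection `s_i` acting on `ℤ^θ`. -/
def sRefl {θ : ℕ} (q : Fin θ → Fin θ → ℂˣ) (i : Fin θ) (β : Fin θ → ℤ) : Fin θ → ℤ :=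
  fun k => β k - (if k = i then ∑ j, cij q i j * β j else 0)

/-- The (real) roots of `q`, together with the base points of the Weyl groupoid at
which they live: pairs `(q', β)` obtained from a simple root of `q` by iterated
reflections. -/
inductive ReachRoot {θ : ℕ} (q₀ : Fin θ → Fin θ → ℂˣ) :
    (Fin θ → Fin θ → ℂˣ) → (Fin θ → ℤ) → Prop
  | simple (j : Fin θ) : ReachRoot q₀ q₀ (fun k => if k = j then 1 else 0)
  | reflect {q' : Fin θ → Fin θ → ℂˣ} {β : Fin θ → ℤ} (i : Fin θ) :
      ReachRoot q₀ q' β → ReachRoot q₀ (reflectMat q' i) (sRefl q' i β)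

/-- `q` has a finite (generalized) root system: all reflections are defined at every
point of the Weyl groupoid, and the set of roots so obtained is finite. -/
def FiniteRootSystem {θ : ℕ} (q : Fin θ → Fin θ → ℂˣ) : Prop :=
  (∀ q' i, (∃ β, ReachRoot q q' β) → reflectable q' i) ∧
    Set.Finite {β : Fin θ → ℤ | ∃ q', ReachRoot q q' β}

/-- Conjecture (Andruskiewitsch–Angiono–Heckenberger): the root system of a Nichols
algebra of diagonal type with finite Gelfand–Kirillov dimension is finite. -/
def AAH : Prop :=
  ∀ (θ : ℕ) (q : Fin θ → Fin θ → ℂˣ) (S : BraidedStr θ q), FinGK (Jq S) → FiniteRootSystem q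

/-- The two-sided ideal of `T(V)` generated by a set. -/
def idealGen (θ : ℕ) (s : Set (TV θ)) : Submodule ℂ (TV θ) :=
  Submodule.span ℂ {x | ∃ g ∈ s, ∃ a b : TV θ, x = a * g * b}

end PreNicholsPaper

/-!
Suppose that the homogeneous primitive elements `y_a` of `T(V)` are, together with `1`, linearly
independent modulo `I`. The leading terms of the relations modulo `I` between the `y_a` form a
pre-Nichols ideal of the tensor algebra on the `y_a`, and the quotient by it grows no faster than
`T(V)/I`. By the AAH conjecture the braiding matrix of the `y_a` therefore has a finite root system.

Write `ζ = q_{ii}`. For the pair `(x_k, x_i³)` the vertex `1` with an edge `-1` cannot be reflected,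
so `x_i³ ∈ I`. There is a primitive element `P` of degree `2α_i + α_j + α_k`. The pairs `(x_i, x_j)`
and `(x_i, x_k)` force `q_{jj} ∈ {-1, ζ²}` and `q_{kk} ∈ {-1, -ζ²}`. In three of the four cases the
pair `(x_i, P)` has an infinite root system, and in the fourth already `(x_i, x_j, x_k)` has one.
Hence `P ∈ I`. Finally, twice the asserted relation is `[x_i, P]_c` plus brackets of `x_{iiij}` and
`x_{iiik}`, which are multiples of `x_i³`.
-/

namespace PreNicholsPaper

section Words

variable {θ : ℕ}

@[simp] lemma wordElem_nil : wordElem θ [] = 1 := rfl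

lemma wordElem_cons (a : Fin θ) (w : List (Fin θ)) :
    wordElem θ (a :: w) = gen θ a * wordElem θ w := by
  simp [wordElem]

lemma wordElem_append (v w : List (Fin θ)) :
    wordElem θ (v ++ w) = wordElem θ v * wordElem θ w := by
  simp [wordElem]

lemma wordElem_singleton (a : Fin θ) : wordElem θ [a] = gen θ a := by
  simp [wordElem]

/-- The basis of the tensor algebra consisting of the monomials. -/
def wordBasis (θ : ℕ) : Module.Basis (List (Fin θ)) ℂ (TV θ) :=
  (FreeAlgebra.basisFreeMonoid ℂ (Fin θ)).reindex FreeMonoid.toList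

lemma wordBasis_apply (w : List (Fin θ)) : wordBasis θ w = wordElem θ w := by
  simp only [wordBasis, Module.Basis.reindex_apply, FreeAlgebra.basisFreeMonoid,
    Module.Basis.map_apply, Finsupp.coe_basisSingleOne]
  change (FreeAlgebra.equivMonoidAlgebraFreeMonoid (R := ℂ) (X := Fin θ)).symm
    (MonoidAlgebra.single (FreeMonoid.ofList w) 1) = _
  rw [AlgEquiv.symm_apply_eq]
  induction w with
  | nil => rw [wordElem_nil, map_one]; rfl
  | cons a w ih =>
    rw [wordElem_cons, map_mul, ← ih]
    simp [FreeAlgebra.equivMonoidAlgebraFreeMonoid, gen, MonoidAlgebra.single_mul_single]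

lemma span_wordElem : Submodule.span ℂ (Set.range (wordElem θ)) = ⊤ := by
  rw [← (wordBasis θ).span_eq]
  exact congrArg _ (congrArg _ (funext wordBasis_apply).symm)

lemma hom_ext_words {M : Type*} [AddCommMonoid M] [Module ℂ M] {f g : TV θ →ₗ[ℂ] M}
    (h : ∀ w, f (wordElem θ w) = g (wordElem θ w)) : f = g :=
  (wordBasis θ).ext fun w => by rw [wordBasis_apply, h]

lemma map_mem_of_words {M : Type*} [AddCommMonoid M] [Module ℂ M] {N : Submodule ℂ M}
    (f : TV θ →ₗ[ℂ] M) (h : ∀ w, f (wordElem θ w) ∈ N) (t : TV θ) : f t ∈ N := by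
  have hN : ⊤ ≤ N.comap f := by
    rw [← span_wordElem, Submodule.span_le]
    rintro _ ⟨w, rfl⟩
    exact h w
  exact hN Submodule.mem_top

lemma word_induction {p : TV θ → Prop} (one : p 1) (cons : ∀ a t, p t → p (gen θ a * t))
    (add : ∀ s t, p s → p t → p (s + t)) (smul : ∀ (c : ℂ) t, p t → p (c • t)) (t : TV θ) :
    p t := by
  have ht : t ∈ Submodule.span ℂ (Set.range (wordElem θ)) := span_wordElem ▸ Submodule.mem_top
  induction ht using Submodule.span_induction with
  | mem x hx =>
    obtain ⟨w, rfl⟩ := hx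
    induction w with
    | nil => exact one
    | cons a w ih => rw [wordElem_cons]; exact cons a _ ih
  | zero => simpa using smul 0 1 one
  | add x y _ _ hx hy => exact add x y hx hy
  | smul c x _ hx => exact smul c x hx

lemma degW_nil : degW θ [] = 0 := by
  ext; simp [degW]

lemma degW_cons (a : Fin θ) (w : List (Fin θ)) : degW θ (a :: w) = δ θ a + degW θ w := by
  ext i
  simp only [degW, δ, List.count_cons, Pi.add_apply, beq_iff_eq]
  rw [add_comm]
  simp [eq_comm]

end Words

section Form

variable {θ : ℕ} (q : Fin θ → Fin θ → ℂˣ)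

lemma qf_add_left (a b c : Fin θ → ℕ) : qf q (a + b) c = qf q a c * qf q b c := by
  simp [qf, add_mul, pow_add, Finset.prod_mul_distrib]

lemma qf_add_right (a b c : Fin θ → ℕ) : qf q a (b + c) = qf q a b * qf q a c := by
  simp [qf, mul_add, pow_add, Finset.prod_mul_distrib]

lemma qf_zero_left (a : Fin θ → ℕ) : qf q 0 a = 1 := by simp [qf]

lemma qf_zero_right (a : Fin θ → ℕ) : qf q a 0 = 1 := by simp [qf]

lemma qf_single (a b : Fin θ) : qf q (δ θ a) (δ θ b) = q a b := by
  unfold qf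
  rw [Finset.prod_eq_single a, Finset.prod_eq_single b]
  · simp [δ]
  · intro c _ hc; simp [δ, hc]
  · simp
  · intro c _ hc; simp [δ, hc]
  · simp

lemma qf_ne_zero (a b : Fin θ → ℕ) : qf q a b ≠ 0 := by
  simp [qf, Finset.prod_ne_zero_iff]

/-- The braiding matrix of a family of homogeneous elements of degrees `d a`. -/
def degBraiding {m : ℕ} (d : Fin m → Fin θ → ℕ) : Fin m → Fin m → ℂˣ :=
  fun a b => Units.mk0 (qf q (d a) (d b)) (qf_ne_zero q _ _)

/-- The algebra automorphism of the tensor algebra scaling degree `c` by `q(d, c)`. -/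
def twist (d : Fin θ → ℕ) : TV θ →ₐ[ℂ] TV θ :=
  FreeAlgebra.lift ℂ fun c => qf q d (δ θ c) • gen θ c

lemma twist_gen (d : Fin θ → ℕ) (c : Fin θ) :
    twist q d (gen θ c) = qf q d (δ θ c) • gen θ c := by
  simp [twist, gen]

lemma twist_wordElem (d : Fin θ → ℕ) (w : List (Fin θ)) :
    twist q d (wordElem θ w) = qf q d (degW θ w) • wordElem θ w := by
  induction w with
  | nil => simp [degW_nil, qf_zero_right]
  | cons a w ih =>
    rw [wordElem_cons, map_mul, ih, twist_gen, degW_cons, qf_add_right, smul_mul_smul_comm]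

lemma twist_homogD (d e : Fin θ → ℕ) {y : TV θ} (hy : y ∈ homogD θ e) :
    twist q d y = qf q d e • y := by
  refine LinearMap.eqOn_span (f := (twist q d).toLinearMap) (g := qf q d e • LinearMap.id) ?_ hy
  rintro _ ⟨w, rfl, rfl⟩
  exact twist_wordElem q d w

lemma twist_add (d e : Fin θ → ℕ) (t : TV θ) :
    twist q (d + e) t = twist q d (twist q e t) := by
  refine LinearMap.congr_fun (f := (twist q (d + e)).toLinearMap)
    (g := (twist q d).toLinearMap ∘ₗ (twist q e).toLinearMap) (hom_ext_words fun w => ?_) t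
  simp [twist_wordElem, qf_add_left, smul_smul, mul_comm]

lemma twist_zero (t : TV θ) : twist q 0 t = t := by
  refine LinearMap.congr_fun (f := (twist q 0).toLinearMap)
    (g := LinearMap.id) (hom_ext_words fun w => ?_) t
  simp [twist_wordElem, qf_zero_left]

/-- The operator `c ⊗ d ↦ y c ⊗ d + q(e, deg c) c ⊗ y d`: left multiplication by
`y ⊗ 1 + 1 ⊗ y` in the braided tensor square, for `y` of degree `e`. It computes the coproduct of
`y t` from that of `t` when `y` is primitive. -/
def primMul (e : Fin θ → ℕ) (y : TV θ) : TV θ ⊗[ℂ] TV θ →ₗ[ℂ] TV θ ⊗[ℂ] TV θ :=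
  TensorProduct.map (LinearMap.mulLeft ℂ y) LinearMap.id +
    TensorProduct.map (twist q e).toLinearMap (LinearMap.mulLeft ℂ y)

lemma primMul_tmul (e : Fin θ → ℕ) (y c d : TV θ) :
    primMul q e y (c ⊗ₜ[ℂ] d) = (y * c) ⊗ₜ[ℂ] d + twist q e c ⊗ₜ[ℂ] (y * d) := by
  simp [primMul]

end Form

section Construction

variable {θ : ℕ} (q : Fin θ → Fin θ → ℂˣ)

/-- Left multiplication by `1 ⊗ b` in the braided tensor square. -/
def braidRight : TV θ →ₐ[ℂ] Module.End ℂ (TV θ ⊗[ℂ] TV θ) :=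
  FreeAlgebra.lift ℂ fun a =>
    TensorProduct.map (twist q (δ θ a)).toLinearMap (LinearMap.mulLeft ℂ (gen θ a))

lemma braidRight_wordElem (w : List (Fin θ)) :
    braidRight q (wordElem θ w) = TensorProduct.map (twist q (degW θ w)).toLinearMap
      (LinearMap.mulLeft ℂ (wordElem θ w)) := by
  induction w with
  | nil => ext; simp [degW_nil, twist_zero]
  | cons a w ih =>
    rw [wordElem_cons, map_mul, ih]
    refine TensorProduct.ext' fun c d => ?_
    simp [braidRight, gen, degW_cons, twist_add]

/-- Multiplication of the braided tensor square. -/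
def braidedMul : TV θ ⊗[ℂ] TV θ →ₗ[ℂ] TV θ ⊗[ℂ] TV θ →ₗ[ℂ] TV θ ⊗[ℂ] TV θ :=
  TensorProduct.lift <| LinearMap.mk₂ ℂ
    (fun a b => TensorProduct.map (LinearMap.mulLeft ℂ a) LinearMap.id ∘ₗ braidRight q b)
    (fun a a' b => by
      rw [← LinearMap.add_comp, ← TensorProduct.map_add_left]; congr 2; ext; simp [add_mul])
    (fun c a b => by
      rw [← LinearMap.smul_comp, ← TensorProduct.map_smul_left]; congr 2; ext; simp)
    (fun a b b' => by rw [map_add, LinearMap.comp_add])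
    (fun c a b => by rw [map_smul, LinearMap.comp_smul])

lemma braidedMul_tmul (a b : TV θ) (z : TV θ ⊗[ℂ] TV θ) :
    braidedMul q (a ⊗ₜ b) z
      = TensorProduct.map (LinearMap.mulLeft ℂ a) LinearMap.id (braidRight q b z) := rfl

/-- The algebra map sending `u` to left multiplication by the coproduct of `u`. -/
def coproductMul : TV θ →ₐ[ℂ] Module.End ℂ (TV θ ⊗[ℂ] TV θ) :=
  FreeAlgebra.lift ℂ fun a => primMul q (δ θ a) (gen θ a)

lemma coproductMul_gen (a : Fin θ) : coproductMul q (gen θ a) = primMul q (δ θ a) (gen θ a) := by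
  simp [coproductMul, gen]

lemma braidedMul_primMul (a : Fin θ) (y z : TV θ ⊗[ℂ] TV θ) :
    braidedMul q (primMul q (δ θ a) (gen θ a) y) z
      = primMul q (δ θ a) (gen θ a) (braidedMul q y z) := by
  induction y using TensorProduct.induction_on with
  | zero => simp
  | add y y' hy hy' => simp only [map_add, LinearMap.add_apply, hy, hy']
  | tmul c d =>
    simp only [primMul_tmul, map_add, LinearMap.add_apply, braidedMul_tmul, map_mul,
      Module.End.mul_apply]
    generalize braidRight q d z = z'
    induction z' using TensorProduct.induction_on with
    | zero => simp
    | add y y' hy hy' =>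
      simp only [map_add] at hy hy' ⊢
      rw [← hy, ← hy']; abel
    | tmul e f => simp [braidRight, gen, primMul_tmul]

lemma coproductMul_eq (u : TV θ) (z : TV θ ⊗[ℂ] TV θ) :
    braidedMul q (coproductMul q u (1 ⊗ₜ 1)) z = coproductMul q u z := by
  induction u using word_induction with
  | one =>
    simp only [map_one, Module.End.one_apply, braidedMul_tmul]
    rw [show LinearMap.mulLeft ℂ (1 : TV θ) = LinearMap.id from by ext; simp]
    simp
  | cons a t ih =>
    rw [map_mul, Module.End.mul_apply, Module.End.mul_apply, coproductMul_gen,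
      braidedMul_primMul, ih]
  | add s t hs ht => simp only [map_add, LinearMap.add_apply, hs, ht]
  | smul c t ht => simp only [map_smul, LinearMap.smul_apply, ht]

/-- The braided bialgebra structure of the tensor algebra. -/
def braidedStr : BraidedStr θ q where
  Δ := LinearMap.applyₗ (1 ⊗ₜ 1) ∘ₗ (coproductMul q).toLinearMap
  mulB := braidedMul q
  mulB_spec a d wb wc := by
    simp [braidedMul_tmul, braidRight_wordElem, twist_wordElem, TensorProduct.smul_tmul']
  Δ_one := by simp
  Δ_gen i := by simp [coproductMul_gen, primMul_tmul]
  Δ_mul u v := by simp [coproductMul_eq]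

end Construction

section Coproduct

variable {θ : ℕ} {q : Fin θ → Fin θ → ℂˣ} (S : BraidedStr θ q)

lemma mulB_one_tmul {e : Fin θ → ℕ} {y : TV θ} (hy : y ∈ homogD θ e) (z : TV θ ⊗[ℂ] TV θ) :
    S.mulB (1 ⊗ₜ y) z
      = TensorProduct.map (twist q e).toLinearMap (LinearMap.mulLeft ℂ y) z := by
  induction hy using Submodule.span_induction generalizing z with
  | mem x hx =>
    obtain ⟨w, rfl, rfl⟩ := hx
    refine LinearMap.congr_fun (f := S.mulB (1 ⊗ₜ wordElem θ w)) (TensorProduct.ext ?_) z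
    refine hom_ext_words fun v => LinearMap.ext fun d => ?_
    simp [S.mulB_spec, twist_wordElem, TensorProduct.smul_tmul']
  | zero =>
    rw [show LinearMap.mulLeft ℂ (0 : TV θ) = 0 from by ext; simp]
    simp
  | add x y _ _ hx hy =>
    rw [show LinearMap.mulLeft ℂ (x + y) = LinearMap.mulLeft ℂ x + LinearMap.mulLeft ℂ y from by
      ext; simp [add_mul], TensorProduct.map_add_right, TensorProduct.tmul_add, map_add]
    simp [hx, hy]
  | smul c x _ hx =>
    rw [show LinearMap.mulLeft ℂ (c • x) = c • LinearMap.mulLeft ℂ x from by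
      ext; simp, TensorProduct.map_smul_right, TensorProduct.tmul_smul, map_smul]
    simp [hx]

lemma mulB_tmul_one (y : TV θ) (z : TV θ ⊗[ℂ] TV θ) :
    S.mulB (y ⊗ₜ 1) z = TensorProduct.map (LinearMap.mulLeft ℂ y) LinearMap.id z := by
  refine LinearMap.congr_fun (f := S.mulB (y ⊗ₜ 1)) (TensorProduct.ext ?_) z
  refine hom_ext_words fun v => LinearMap.ext fun d => ?_
  have := S.mulB_spec y d [] v
  simpa [degW_nil, qf_zero_left] using this

lemma Δ_primitive_mul {e : Fin θ → ℕ} {y : TV θ} (hy : y ∈ homogD θ e) (hp : IsPrimitiveIn S y)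
    (t : TV θ) : S.Δ (y * t) = primMul q e y (S.Δ t) := by
  rw [S.Δ_mul, hp, map_add, LinearMap.add_apply, mulB_one_tmul S hy, mulB_tmul_one]
  rfl

lemma gen_mem_homogD (a : Fin θ) : gen θ a ∈ homogD θ (δ θ a) :=
  Submodule.subset_span ⟨[a], by simp [degW_cons, degW_nil], (wordElem_singleton a).symm⟩

lemma Δ_gen_mul (a : Fin θ) (t : TV θ) :
    S.Δ (gen θ a * t) = primMul q (δ θ a) (gen θ a) (S.Δ t) :=
  Δ_primitive_mul S (gen_mem_homogD a) (S.Δ_gen a) t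

end Coproduct

section Grading

variable {θ : ℕ}

/-- The projection of the tensor algebra onto its component of total degree `n`. -/
def proj (θ n : ℕ) : TV θ →ₗ[ℂ] TV θ :=
  (wordBasis θ).constr ℂ fun w => if w.length = n then wordElem θ w else 0

lemma proj_wordElem (n : ℕ) (w : List (Fin θ)) :
    proj θ n (wordElem θ w) = if w.length = n then wordElem θ w else 0 := by
  rw [proj, ← wordBasis_apply, Module.Basis.constr_basis, wordBasis_apply]

lemma wordElem_mem_Wfil {n : ℕ} {w : List (Fin θ)} (hw : w.length ≤ n) :
    wordElem θ w ∈ Wfil θ n :=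
  Submodule.subset_span ⟨w, hw, rfl⟩

lemma wordElem_mem_homogTot {n : ℕ} {w : List (Fin θ)} (hw : w.length = n) :
    wordElem θ w ∈ homogTot θ n :=
  Submodule.subset_span ⟨w, hw, rfl⟩

lemma Wfil_mono {m n : ℕ} (h : m ≤ n) : Wfil θ m ≤ Wfil θ n :=
  Submodule.span_mono fun _ ⟨w, hw, hx⟩ => ⟨w, hw.trans h, hx⟩

lemma homogTot_le_Wfil (n : ℕ) : homogTot θ n ≤ Wfil θ n :=
  Submodule.span_mono fun _ ⟨w, hw, hx⟩ => ⟨w, hw.le, hx⟩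

lemma proj_mem_homogTot (n : ℕ) (t : TV θ) : proj θ n t ∈ homogTot θ n := by
  refine map_mem_of_words (proj θ n) (fun w => ?_) t
  rw [proj_wordElem]
  split_ifs with hw
  exacts [wordElem_mem_homogTot hw, zero_mem _]

lemma proj_of_mem_homogTot {n : ℕ} {t : TV θ} (ht : t ∈ homogTot θ n) : proj θ n t = t := by
  refine LinearMap.eqOn_span (f := proj θ n) (g := LinearMap.id) ?_ ht
  rintro _ ⟨w, rfl, rfl⟩
  simp [proj_wordElem]

lemma proj_of_mem_homogTot_of_ne {n l : ℕ} {t : TV θ} (ht : t ∈ homogTot θ n) (h : n ≠ l) :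
    proj θ l t = 0 := by
  refine LinearMap.eqOn_span (f := proj θ l) (g := 0) ?_ ht
  rintro _ ⟨w, rfl, rfl⟩
  simp [proj_wordElem, h]

lemma proj_of_mem_Wfil_of_lt {n l : ℕ} (h : n < l) {t : TV θ} (ht : t ∈ Wfil θ n) :
    proj θ l t = 0 := by
  refine LinearMap.eqOn_span (f := proj θ l) (g := 0) ?_ ht
  rintro _ ⟨w, hw, rfl⟩
  simp [proj_wordElem, (hw.trans_lt h).ne]

lemma sub_proj_mem_Wfil {n : ℕ} {t : TV θ} (ht : t ∈ Wfil θ (n + 1)) :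
    t - proj θ (n + 1) t ∈ Wfil θ n := by
  have h : Wfil θ (n + 1) ≤ (Wfil θ n).comap (LinearMap.id - proj θ (n + 1)) := by
    refine Submodule.span_le.mpr ?_
    rintro _ ⟨w, hw, rfl⟩
    rw [SetLike.mem_coe, Submodule.mem_comap, LinearMap.sub_apply, LinearMap.id_apply,
      proj_wordElem]
    split_ifs with hw'
    · simp
    · rw [sub_zero]; exact wordElem_mem_Wfil (by lia)
  exact h ht

lemma proj_zero_of_mem_Wfil_zero {t : TV θ} (ht : t ∈ Wfil θ 0) : proj θ 0 t = t := by
  have h : Wfil θ 0 ≤ homogTot θ 0 :=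
    Submodule.span_mono fun _ ⟨w, hw, hx⟩ => ⟨w, Nat.le_zero.mp hw, hx⟩
  exact proj_of_mem_homogTot (h ht)

lemma proj_wordElem_mul (v : List (Fin θ)) (n : ℕ) (t : TV θ) :
    proj θ (v.length + n) (wordElem θ v * t) = wordElem θ v * proj θ n t := by
  refine LinearMap.congr_fun (f := proj θ (v.length + n) ∘ₗ LinearMap.mulLeft ℂ (wordElem θ v))
    (g := LinearMap.mulLeft ℂ (wordElem θ v) ∘ₗ proj θ n) (hom_ext_words fun w => ?_) t
  simp [← wordElem_append, proj_wordElem, mul_ite]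

lemma proj_mul_wordElem (v : List (Fin θ)) (n : ℕ) (t : TV θ) :
    proj θ (n + v.length) (t * wordElem θ v) = proj θ n t * wordElem θ v := by
  refine LinearMap.congr_fun (f := proj θ (n + v.length) ∘ₗ LinearMap.mulRight ℂ (wordElem θ v))
    (g := LinearMap.mulRight ℂ (wordElem θ v) ∘ₗ proj θ n) (hom_ext_words fun w => ?_) t
  simp [← wordElem_append, proj_wordElem, ite_mul]

lemma mul_mem_Wfil {m n : ℕ} {s t : TV θ} (hs : s ∈ Wfil θ m) (ht : t ∈ Wfil θ n) :
    s * t ∈ Wfil θ (m + n) := by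
  have h : Wfil θ m * Wfil θ n ≤ Wfil θ (m + n) := by
    rw [Wfil, Wfil, Submodule.span_mul_span, Submodule.span_le]
    rintro _ ⟨_, ⟨v, hv, rfl⟩, _, ⟨w, hw, rfl⟩, rfl⟩
    simp only [← wordElem_append]
    exact wordElem_mem_Wfil (by simp; lia)
  exact h (Submodule.mul_mem_mul hs ht)

lemma gen_mem_Wfil (a : Fin θ) : gen θ a ∈ Wfil θ 1 := by
  rw [← wordElem_singleton]; exact wordElem_mem_Wfil (by simp)

lemma exists_mem_Wfil (t : TV θ) : ∃ n, t ∈ Wfil θ n := by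
  induction t using word_induction with
  | one => exact ⟨0, wordElem_mem_Wfil (w := []) (by simp)⟩
  | cons a t ih => obtain ⟨n, hn⟩ := ih; exact ⟨1 + n, mul_mem_Wfil (gen_mem_Wfil a) hn⟩
  | add s t hs ht =>
    obtain ⟨m, hm⟩ := hs
    obtain ⟨n, hn⟩ := ht
    exact ⟨m + n, add_mem (Wfil_mono (by lia) hm) (Wfil_mono (by lia) hn)⟩
  | smul c t ht => obtain ⟨n, hn⟩ := ht; exact ⟨n, Submodule.smul_mem _ _ hn⟩

instance (n : ℕ) : FiniteDimensional ℂ (Wfil θ n) := by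
  refine FiniteDimensional.span_of_finite ℂ
    (((List.finite_length_le (Fin θ) n).image (wordElem θ)).subset ?_)
  rintro _ ⟨w, hw, rfl⟩
  exact ⟨w, hw, rfl⟩

end Grading

section Leading

variable {θ : ℕ} (J : Submodule ℂ (TV θ))

/-- The leading terms of degree `n` of the elements of `J`. -/
def leadDeg (n : ℕ) : Submodule ℂ (TV θ) := (Wfil θ n ⊓ J).map (proj θ n)

/-- The span of the leading terms of the elements of `J`, i.e. the associated graded space of `J`
for the length filtration. -/
def lead : Submodule ℂ (TV θ) := ⨆ n, leadDeg J n

lemma leadDeg_le_homogTot (n : ℕ) : leadDeg J n ≤ homogTot θ n := by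
  rintro _ ⟨t, _, rfl⟩
  exact proj_mem_homogTot n t

variable {J} in
lemma proj_mem_leadDeg {n : ℕ} {t : TV θ} (ht : t ∈ Wfil θ n) (hJ : t ∈ J) :
    proj θ n t ∈ leadDeg J n := ⟨t, ⟨ht, hJ⟩, rfl⟩

lemma leadDeg_le_lead (n : ℕ) : leadDeg J n ≤ lead J := le_iSup _ n

variable {J} in
lemma lead_le_iff {N : Submodule ℂ (TV θ)} :
    lead J ≤ N ↔ ∀ n, ∀ t ∈ Wfil θ n, t ∈ J → proj θ n t ∈ N := by
  refine iSup_le_iff.trans (forall_congr' fun n => ?_)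
  rw [leadDeg, Submodule.map_le_iff_le_comap]
  exact ⟨fun h t ht hJ => h ⟨ht, hJ⟩, fun h t ht => h t ht.1 ht.2⟩

/-- A family of complements of the leading terms of `J` in each degree. -/
structure IsLeadCompl (C : ℕ → Submodule ℂ (TV θ)) : Prop where
  le (n : ℕ) : C n ≤ homogTot θ n
  inf (n : ℕ) : C n ⊓ leadDeg J n = ⊥
  sup (n : ℕ) : homogTot θ n ≤ C n ⊔ leadDeg J n

lemma exists_isLeadCompl : ∃ C, IsLeadCompl J C := by
  choose D hD using fun n => exists_isCompl (leadDeg J n)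
  refine ⟨fun n => D n ⊓ homogTot θ n, fun n => inf_le_right, fun n => ?_, fun n => ?_⟩
  · rw [eq_bot_iff, ← (hD n).inf_eq_bot]
    exact le_inf inf_le_right (inf_le_left.trans inf_le_left)
  · rw [sup_comm, ← sup_inf_assoc_of_le _ (leadDeg_le_homogTot J n), (hD n).sup_eq_top, top_inf_eq]

/-- The graded subspace with components `C l`. -/
def gradedSub (C : ℕ → Submodule ℂ (TV θ)) : Submodule ℂ (TV θ) := ⨅ l, (C l).comap (proj θ l)

lemma mem_gradedSub {C : ℕ → Submodule ℂ (TV θ)} {t : TV θ} :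
    t ∈ gradedSub C ↔ ∀ l, proj θ l t ∈ C l := by
  simp [gradedSub]

variable {J} {C : ℕ → Submodule ℂ (TV θ)}

namespace IsLeadCompl

lemma le_gradedSub (hC : IsLeadCompl J C) (n : ℕ) : C n ≤ gradedSub C := by
  intro t ht
  rw [mem_gradedSub]
  intro l
  obtain rfl | h := eq_or_ne n l
  · rwa [proj_of_mem_homogTot (hC.le n ht)]
  · rw [proj_of_mem_homogTot_of_ne (hC.le n ht) h]
    exact zero_mem _

lemma eq_zero_of_mem (hC : IsLeadCompl J C) {t : TV θ} (ht : t ∈ gradedSub C) (hJ : t ∈ J) :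
    t = 0 := by
  obtain ⟨n, hn⟩ := exists_mem_Wfil t
  have key : ∀ n, t ∈ Wfil θ n → proj θ n t = 0 := fun n hn => by
    have : proj θ n t ∈ C n ⊓ leadDeg J n := ⟨mem_gradedSub.1 ht n, proj_mem_leadDeg hn hJ⟩
    rwa [hC.inf, Submodule.mem_bot] at this
  induction n with
  | zero => rw [← proj_zero_of_mem_Wfil_zero hn, key 0 hn]
  | succ n ih => exact ih (by simpa [key _ hn] using sub_proj_mem_Wfil hn)

lemma exists_sub_mem (hC : IsLeadCompl J C) {n : ℕ} {t : TV θ} (ht : t ∈ Wfil θ n) :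
    ∃ c ∈ gradedSub C ⊓ Wfil θ n, t - c ∈ J := by
  induction n generalizing t with
  | zero =>
    obtain ⟨c, hc, _, ⟨s, ⟨hs, hs'⟩, rfl⟩, h⟩ :=
      Submodule.mem_sup.1 (hC.sup 0 (proj_mem_homogTot 0 t))
    refine ⟨c, ⟨hC.le_gradedSub 0 hc, homogTot_le_Wfil 0 (hC.le 0 hc)⟩, ?_⟩
    rw [proj_zero_of_mem_Wfil_zero ht, proj_zero_of_mem_Wfil_zero hs] at h
    rwa [← h, add_sub_cancel_left]
  | succ n ih =>
    obtain ⟨c, hc, _, ⟨s, ⟨hs, hs'⟩, rfl⟩, h⟩ :=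
      Submodule.mem_sup.1 (hC.sup (n + 1) (proj_mem_homogTot (n + 1) t))
    have hcW := homogTot_le_Wfil (n + 1) (hC.le (n + 1) hc)
    have hmem : t - c - s ∈ Wfil θ n := by
      have := sub_proj_mem_Wfil (sub_mem (sub_mem ht hcW) hs)
      rwa [map_sub, map_sub, proj_of_mem_homogTot (hC.le _ hc), ← h, add_sub_cancel_left,
        sub_self, sub_zero] at this
    obtain ⟨c', hc', hJ⟩ := ih hmem
    refine ⟨c + c', ⟨add_mem (hC.le_gradedSub _ hc) hc'.1,
      add_mem hcW (Wfil_mono (Nat.le_succ n) hc'.2)⟩, ?_⟩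
    convert add_mem hJ hs' using 1
    abel

lemma isCompl (hC : IsLeadCompl J C) : IsCompl (gradedSub C) J := by
  refine ⟨Submodule.disjoint_def.2 fun t ht hJ => hC.eq_zero_of_mem ht hJ,
    codisjoint_iff.2 (eq_top_iff.2 fun t _ => ?_)⟩
  obtain ⟨n, hn⟩ := exists_mem_Wfil t
  obtain ⟨c, hc, h⟩ := hC.exists_sub_mem hn
  exact Submodule.mem_sup.2 ⟨c, hc.1, _, h, by abel⟩

end IsLeadCompl

lemma exists_filtered_projection (J : Submodule ℂ (TV θ)) : ∃ P : TV θ →ₗ[ℂ] TV θ,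
    J ≤ LinearMap.ker P ∧ (∀ t, t - P t ∈ J) ∧ ∀ n, ∀ t ∈ Wfil θ n, P t ∈ Wfil θ n := by
  obtain ⟨C, hC⟩ := exists_isLeadCompl J
  set P := (gradedSub C).projection J hC.isCompl
  have hP : ∀ c ∈ gradedSub C, ∀ t, t - c ∈ J → P t = c := fun c hc t h => by
    rw [← sub_add_cancel t c, map_add, Submodule.projection_apply_of_mem_right _ h,
      Submodule.projection_apply_of_mem_left _ hc, zero_add]
  refine ⟨P, fun t ht => Submodule.projection_apply_of_mem_right _ ht, fun t => ?_,
    fun n t ht => ?_⟩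
  · obtain ⟨n, hn⟩ := exists_mem_Wfil t
    obtain ⟨c, hc, h⟩ := hC.exists_sub_mem hn
    rwa [hP c hc.1 t h]
  · obtain ⟨c, hc, h⟩ := hC.exists_sub_mem ht
    rw [hP c hc.1 t h]
    exact hc.2

lemma finrank_map_mkQ_lead_le (J : Submodule ℂ (TV θ)) (n : ℕ) :
    Module.finrank ℂ ((Wfil θ n).map (lead J).mkQ) ≤ Module.finrank ℂ ((Wfil θ n).map J.mkQ) := by
  obtain ⟨C, hC⟩ := exists_isLeadCompl J
  let D := gradedSub C ⊓ Wfil θ n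
  have : FiniteDimensional ℂ D := Submodule.finiteDimensional_of_le inf_le_right
  have hlead : (Wfil θ n).map (lead J).mkQ ≤ D.map (lead J).mkQ := by
    rw [Wfil, Submodule.map_span, Submodule.span_le]
    rintro _ ⟨_, ⟨w, hw, rfl⟩, rfl⟩
    obtain ⟨c, hc, s, hs, h⟩ :=
      Submodule.mem_sup.1 (hC.sup w.length (wordElem_mem_homogTot rfl))
    refine ⟨c, ⟨hC.le_gradedSub _ hc, Wfil_mono hw (homogTot_le_Wfil _ (hC.le _ hc))⟩, ?_⟩
    have hs' : (lead J).mkQ s = 0 := by simpa using leadDeg_le_lead J _ hs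
    rw [← h, map_add, hs', add_zero]
  have hinj : Module.finrank ℂ (D.map J.mkQ) = Module.finrank ℂ D := by
    rw [← LinearMap.range_domRestrict]
    refine LinearMap.finrank_range_of_inj (LinearMap.ker_eq_bot.1 (LinearMap.ker_eq_bot'.2 ?_))
    rintro ⟨t, ht⟩ h
    exact Subtype.ext (hC.eq_zero_of_mem ht.1 (by simpa using h))
  calc _ ≤ Module.finrank ℂ (D.map (lead J).mkQ) := Submodule.finrank_mono hlead
    _ ≤ Module.finrank ℂ D := Submodule.finrank_map_le _ _
    _ = Module.finrank ℂ (D.map J.mkQ) := hinj.symm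
    _ ≤ _ := Submodule.finrank_mono (Submodule.map_mono inf_le_right)

lemma mul_left_mem_lead (hJ : ∀ a x : TV θ, x ∈ J → a * x ∈ J) (a x : TV θ) (hx : x ∈ lead J) :
    a * x ∈ lead J := by
  refine map_mem_of_words (LinearMap.mulRight ℂ x) (fun w => ?_) a
  suffices h : lead J ≤ (lead J).comap (LinearMap.mulLeft ℂ (wordElem θ w)) from h hx
  refine lead_le_iff.2 fun n t ht htJ => ?_
  rw [Submodule.mem_comap, LinearMap.mulLeft_apply, ← proj_wordElem_mul]
  exact leadDeg_le_lead J _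
    (proj_mem_leadDeg (mul_mem_Wfil (wordElem_mem_Wfil le_rfl) ht) (hJ _ _ htJ))

lemma mul_right_mem_lead (hJ : ∀ a x : TV θ, x ∈ J → x * a ∈ J) (a x : TV θ) (hx : x ∈ lead J) :
    x * a ∈ lead J := by
  refine map_mem_of_words (LinearMap.mulLeft ℂ x) (fun w => ?_) a
  suffices h : lead J ≤ (lead J).comap (LinearMap.mulRight ℂ (wordElem θ w)) from h hx
  refine lead_le_iff.2 fun n t ht htJ => ?_
  rw [Submodule.mem_comap, LinearMap.mulRight_apply, ← proj_mul_wordElem]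
  exact leadDeg_le_lead J _
    (proj_mem_leadDeg (mul_mem_Wfil ht (wordElem_mem_Wfil le_rfl)) (hJ _ _ htJ))

lemma lead_eq_span_of_Wfil_one (h : Disjoint (Wfil θ 1) J) :
    lead J = Submodule.span ℂ {x | x ∈ lead J ∧ ∃ n, 2 ≤ n ∧ x ∈ homogTot θ n} := by
  refine le_antisymm (lead_le_iff.2 fun n t ht htJ => ?_) (Submodule.span_le.2 fun t ht => ht.1)
  rcases lt_or_ge n 2 with hn | hn
  · rw [Submodule.disjoint_def.1 h t (Wfil_mono (by lia) ht) htJ, map_zero]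
    exact zero_mem _
  · exact Submodule.subset_span
      ⟨leadDeg_le_lead J n (proj_mem_leadDeg ht htJ), n, hn, proj_mem_homogTot n t⟩

end Leading

section LeadingCoideal

open Finset.HasAntidiagonal

variable {θ : ℕ} {q : Fin θ → Fin θ → ℂˣ}

/-- The component of total degree `n` of `T(V) ⊗ T(V)`. -/
def tensTot (θ n : ℕ) : Submodule ℂ (TV θ ⊗[ℂ] TV θ) :=
  Submodule.span ℂ {x | ∃ v w : List (Fin θ), v.length + w.length = n ∧
    x = wordElem θ v ⊗ₜ[ℂ] wordElem θ w}

lemma primMul_mem_tensTot {n : ℕ} {z : TV θ ⊗[ℂ] TV θ} (hz : z ∈ tensTot θ n) (a : Fin θ) :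
    primMul q (δ θ a) (gen θ a) z ∈ tensTot θ (n + 1) := by
  suffices h : tensTot θ n ≤ (tensTot θ (n + 1)).comap (primMul q (δ θ a) (gen θ a)) from h hz
  refine Submodule.span_le.2 ?_
  rintro _ ⟨v, w, rfl, rfl⟩
  rw [SetLike.mem_coe, Submodule.mem_comap, primMul_tmul, twist_wordElem, ← wordElem_cons,
    ← wordElem_cons, ← TensorProduct.smul_tmul']
  exact add_mem (Submodule.subset_span ⟨_, _, by simp; lia, rfl⟩)
    (Submodule.smul_mem _ _ (Submodule.subset_span ⟨_, _, by simp; lia, rfl⟩))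

lemma Δ_wordElem_mem (S : BraidedStr θ q) (w : List (Fin θ)) :
    S.Δ (wordElem θ w) ∈ tensTot θ w.length := by
  induction w with
  | nil =>
    rw [wordElem_nil, S.Δ_one]
    exact Submodule.subset_span ⟨[], [], rfl, rfl⟩
  | cons a w ih =>
    rw [wordElem_cons, Δ_gen_mul]
    exact primMul_mem_tensTot ih a

lemma sum_map_proj_of_mem_tensTot {l : ℕ} (n : ℕ) {z : TV θ ⊗[ℂ] TV θ} (hz : z ∈ tensTot θ l) :
    ∑ p ∈ antidiagonal n, TensorProduct.map (proj θ p.1) (proj θ p.2) z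
      = if l = n then z else 0 := by
  rw [← LinearMap.sum_apply]
  refine LinearMap.eqOn_span (f := ∑ p ∈ antidiagonal n, TensorProduct.map (proj θ p.1)
    (proj θ p.2)) (g := if l = n then LinearMap.id else 0) ?_ hz |>.trans (by split_ifs <;> rfl)
  rintro _ ⟨v, w, rfl, rfl⟩
  have hterm (p : ℕ × ℕ) :
      TensorProduct.map (proj θ p.1) (proj θ p.2) (wordElem θ v ⊗ₜ[ℂ] wordElem θ w)
        = if (v.length, w.length) = p then wordElem θ v ⊗ₜ[ℂ] wordElem θ w else 0 := by
    simp only [TensorProduct.map_tmul, proj_wordElem, TensorProduct.ite_tmul,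
      TensorProduct.tmul_ite, ← ite_and, Prod.ext_iff, and_comm]
  simp only [LinearMap.sum_apply, hterm, Finset.sum_ite_eq,
    mem_antidiagonal]
  split_ifs <;> rfl

lemma Δ_proj (S : BraidedStr θ q) (n : ℕ) (t : TV θ) :
    S.Δ (proj θ n t)
      = ∑ p ∈ antidiagonal n, TensorProduct.map (proj θ p.1) (proj θ p.2) (S.Δ t) := by
  rw [← LinearMap.sum_apply]
  refine LinearMap.congr_fun (f := S.Δ ∘ₗ proj θ n)
    (g := (∑ p ∈ antidiagonal n, TensorProduct.map (proj θ p.1) (proj θ p.2)) ∘ₗ S.Δ)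
    (hom_ext_words fun w => ?_) t
  rw [LinearMap.comp_apply, LinearMap.comp_apply, LinearMap.sum_apply, proj_wordElem,
    sum_map_proj_of_mem_tensTot n (Δ_wordElem_mem S w)]
  split_ifs <;> simp

lemma tmul_mem_mixedPair_left {I J : Submodule ℂ (TV θ)} {a : TV θ} (ha : a ∈ I) (b : TV θ) :
    a ⊗ₜ[ℂ] b ∈ mixedPair I J := Submodule.subset_span (Or.inl ⟨a, b, ha, rfl⟩)

lemma tmul_mem_mixedPair_right {I J : Submodule ℂ (TV θ)} (a : TV θ) {b : TV θ} (hb : b ∈ J) :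
    a ⊗ₜ[ℂ] b ∈ mixedPair I J := Submodule.subset_span (Or.inr ⟨a, b, hb, rfl⟩)

lemma tmul_sub_tmul_mem_mixedSub {J : Submodule ℂ (TV θ)} {a a' b b' : TV θ} (ha : a - a' ∈ J)
    (hb : b - b' ∈ J) : a ⊗ₜ[ℂ] b - a' ⊗ₜ[ℂ] b' ∈ mixedSub J := by
  rw [mixedSub]
  convert add_mem (tmul_mem_mixedPair_left (J := J) ha b)
    (tmul_mem_mixedPair_right (I := J) a' hb) using 1
  rw [TensorProduct.sub_tmul, TensorProduct.tmul_sub]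
  abel

section FilteredProjection

variable {J : Submodule ℂ (TV θ)} {P : TV θ →ₗ[ℂ] TV θ} (hP : ∀ t, t - P t ∈ J)
  (hW : ∀ n, ∀ t ∈ Wfil θ n, P t ∈ Wfil θ n)

include hP hW

lemma proj_sub_proj_mem_lead {n : ℕ} {t : TV θ} (ht : t ∈ Wfil θ n) :
    proj θ n t - proj θ n (P t) ∈ lead J := by
  rw [← map_sub]
  exact leadDeg_le_lead J n (proj_mem_leadDeg (sub_mem ht (hW n t ht)) (hP t))

lemma map_proj_sub_mem_mixedSub {n l : ℕ} (hl : l ≤ n) {z : TV θ ⊗[ℂ] TV θ}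
    (hz : z ∈ tensTot θ l) {p : ℕ × ℕ} (hp : p ∈ antidiagonal n) :
    TensorProduct.map (proj θ p.1) (proj θ p.2) (z - TensorProduct.map P P z)
      ∈ mixedSub (lead J) := by
  suffices h : tensTot θ l ≤ (mixedSub (lead J)).comap
      (TensorProduct.map (proj θ p.1) (proj θ p.2) ∘ₗ (LinearMap.id - TensorProduct.map P P)) from
    h hz
  refine Submodule.span_le.2 ?_
  rintro _ ⟨v, w, rfl, rfl⟩
  have hv : wordElem θ v ∈ Wfil θ v.length := wordElem_mem_Wfil le_rfl
  have hw : wordElem θ w ∈ Wfil θ w.length := wordElem_mem_Wfil le_rfl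
  obtain ⟨a, b⟩ := p
  obtain rfl : a + b = n := mem_antidiagonal.1 hp
  simp only [SetLike.mem_coe, Submodule.mem_comap, LinearMap.comp_apply, LinearMap.sub_apply,
    LinearMap.id_apply, map_sub, TensorProduct.map_tmul]
  obtain hva | hva := lt_or_ge v.length a
  · simp [proj_of_mem_Wfil_of_lt hva hv, proj_of_mem_Wfil_of_lt hva (hW _ _ hv)]
  obtain hwb | hwb := lt_or_ge w.length b
  · simp [proj_of_mem_Wfil_of_lt hwb hw, proj_of_mem_Wfil_of_lt hwb (hW _ _ hw)]
  exact tmul_sub_tmul_mem_mixedSub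
    (proj_sub_proj_mem_lead hP hW (Wfil_mono (by lia) hv))
    (proj_sub_proj_mem_lead hP hW (Wfil_mono (by lia) hw))

end FilteredProjection

lemma Δ_mem_mixedSub_lead (S : BraidedStr θ q) {J : Submodule ℂ (TV θ)}
    (hJ : ∀ t ∈ J, TensorProduct.map J.mkQ J.mkQ (S.Δ t) = 0) {t : TV θ} (ht : t ∈ lead J) :
    S.Δ t ∈ mixedSub (lead J) := by
  obtain ⟨P, hP0, hP, hW⟩ := exists_filtered_projection J
  have hΔP : ∀ t ∈ J, TensorProduct.map P P (S.Δ t) = 0 := fun t ht => by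
    rw [← J.liftQ_mkQ P hP0, TensorProduct.map_comp, LinearMap.comp_apply, hJ t ht, map_zero]
  suffices h : lead J ≤ (mixedSub (lead J)).comap S.Δ from h ht
  refine lead_le_iff.2 fun n t ht htJ => ?_
  rw [Submodule.mem_comap, Δ_proj]
  refine Submodule.sum_mem _ fun p hp => ?_
  have h : Wfil θ n ≤ (mixedSub (lead J)).comap (TensorProduct.map (proj θ p.1) (proj θ p.2) ∘ₗ
      (LinearMap.id - TensorProduct.map P P) ∘ₗ S.Δ) := by
    refine Submodule.span_le.2 ?_
    rintro _ ⟨w, hw, rfl⟩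
    exact map_proj_sub_mem_mixedSub hP hW hw (Δ_wordElem_mem S w) hp
  simpa [hΔP t htJ] using h ht

lemma isPreNicholsIdeal_lead (S : BraidedStr θ q) {J : Submodule ℂ (TV θ)}
    (mul_left : ∀ a x : TV θ, x ∈ J → a * x ∈ J) (mul_right : ∀ a x : TV θ, x ∈ J → x * a ∈ J)
    (low : Disjoint (Wfil θ 1) J)
    (coideal : ∀ t ∈ J, TensorProduct.map J.mkQ J.mkQ (S.Δ t) = 0) :
    IsPreNicholsIdeal S (lead J) where
  mul_left := mul_left_mem_lead mul_left
  mul_right := mul_right_mem_lead mul_right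
  homog_ge2 := lead_eq_span_of_Wfil_one low
  coideal _ := Δ_mem_mixedSub_lead S coideal

end LeadingCoideal

section Transfer

variable {θ : ℕ} {q : Fin θ → Fin θ → ℂˣ} {S : BraidedStr θ q} {I : Submodule ℂ (TV θ)}
  {m : ℕ} {y : Fin m → TV θ} {d : Fin m → Fin θ → ℕ}

lemma lift_gen (y : Fin m → TV θ) (a : Fin m) : FreeAlgebra.lift ℂ y (gen m a) = y a := by
  simp [gen]

lemma lift_twist (hy : ∀ a, y a ∈ homogD θ (d a)) (a : Fin m) (t : TV m) :
    FreeAlgebra.lift ℂ y (twist (degBraiding q d) (δ m a) t)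
      = twist q (d a) (FreeAlgebra.lift ℂ y t) := by
  induction t using word_induction with
  | one => simp
  | cons b t ih =>
    rw [map_mul, map_mul, ih, twist_gen, map_smul, lift_gen, map_mul, map_mul, lift_gen,
      twist_homogD q _ _ (hy b), qf_single, degBraiding, Units.val_mk0]
  | add s t hs ht => simp only [map_add, hs, ht]
  | smul c t ht => simp only [map_smul, ht]

lemma Δ_lift (S' : BraidedStr m (degBraiding q d)) (hy : ∀ a, y a ∈ homogD θ (d a))
    (hp : ∀ a, IsPrimitiveIn S (y a)) (t : TV m) :
    S.Δ (FreeAlgebra.lift ℂ y t) = TensorProduct.map (FreeAlgebra.lift ℂ y).toLinearMap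
      (FreeAlgebra.lift ℂ y).toLinearMap (S'.Δ t) := by
  induction t using word_induction with
  | one => simp [S.Δ_one, S'.Δ_one]
  | cons b t ih =>
    rw [map_mul, lift_gen, Δ_primitive_mul S (hy b) (hp b), ih, Δ_gen_mul]
    generalize S'.Δ t = z
    induction z using TensorProduct.induction_on with
    | zero => simp
    | add z z' hz hz' => simp only [map_add, hz, hz']
    | tmul u v => simp [primMul_tmul, lift_twist hy, lift_gen]
  | add s t hs ht => simp only [map_add, hs, ht]
  | smul c t ht => simp only [map_smul, ht]

lemma map_mkQ_of_mem_mixedSub {z : TV θ ⊗[ℂ] TV θ} (hz : z ∈ mixedSub I) :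
    TensorProduct.map I.mkQ I.mkQ z = 0 := by
  suffices mixedSub I ≤ LinearMap.ker (TensorProduct.map I.mkQ I.mkQ) from this hz
  refine Submodule.span_le.2 ?_
  rintro _ (⟨a, b, h, rfl⟩ | ⟨a, b, h, rfl⟩) <;>
    simp [(Submodule.Quotient.mk_eq_zero I).2 h]

/-- The relations modulo `I` between the elements `y a`. -/
def relations (I : Submodule ℂ (TV θ)) (y : Fin m → TV θ) : Submodule ℂ (TV m) :=
  I.comap (FreeAlgebra.lift ℂ y).toLinearMap

lemma mem_relations {t : TV m} : t ∈ relations I y ↔ FreeAlgebra.lift ℂ y t ∈ I := Iff.rfl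

/-- The embedding of the quotient by the relations between the `y a` induced by `x_a ↦ y a`. -/
def relationsMap (I : Submodule ℂ (TV θ)) (y : Fin m → TV θ) :
    (TV m ⧸ relations I y) →ₗ[ℂ] TV θ ⧸ I :=
  (relations I y).mapQ I (FreeAlgebra.lift ℂ y).toLinearMap le_rfl

lemma relationsMap_comp_mkQ : relationsMap I y ∘ₗ (relations I y).mkQ
    = I.mkQ ∘ₗ (FreeAlgebra.lift ℂ y).toLinearMap :=
  Submodule.mapQ_mkQ ..

lemma relationsMap_injective : Function.Injective (relationsMap I y) := by
  rw [← LinearMap.ker_eq_bot]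
  exact Submodule.ker_liftQ_eq_bot _ _ _ fun t ht => mem_relations.2 (by simpa using ht)

lemma map_mkQ_Δ_of_mem_relations (hI : IsPreNicholsIdeal S I) (S' : BraidedStr m (degBraiding q d))
    (hy : ∀ a, y a ∈ homogD θ (d a)) (hp : ∀ a, IsPrimitiveIn S (y a)) {t : TV m}
    (ht : t ∈ relations I y) :
    TensorProduct.map (relations I y).mkQ (relations I y).mkQ (S'.Δ t) = 0 := by
  apply TensorProduct.map_injective_of_flat_flat _ _ (relationsMap_injective (I := I) (y := y))
    relationsMap_injective
  rw [map_zero, ← LinearMap.comp_apply, ← TensorProduct.map_comp, relationsMap_comp_mkQ,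
    TensorProduct.map_comp, LinearMap.comp_apply, ← Δ_lift S' hy hp,
    map_mkQ_of_mem_mixedSub (hI.coideal _ (mem_relations.1 ht))]

lemma isPreNicholsIdeal_lead_relations (hI : IsPreNicholsIdeal S I)
    (S' : BraidedStr m (degBraiding q d)) (hy : ∀ a, y a ∈ homogD θ (d a))
    (hp : ∀ a, IsPrimitiveIn S (y a)) (hind : Disjoint (Wfil m 1) (relations I y)) :
    IsPreNicholsIdeal S' (lead (relations I y)) := by
  refine isPreNicholsIdeal_lead S' (fun a x hx => ?_) (fun a x hx => ?_) hind
    fun t ht => map_mkQ_Δ_of_mem_relations hI S' hy hp ht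
  · rw [mem_relations, map_mul]
    exact hI.mul_left _ _ hx
  · rw [mem_relations, map_mul]
    exact hI.mul_right _ _ hx

lemma lift_mem_Wfil {L : ℕ} (hL : ∀ a, y a ∈ Wfil θ L) {n : ℕ} {t : TV m} (ht : t ∈ Wfil m n) :
    FreeAlgebra.lift ℂ y t ∈ Wfil θ (L * n) := by
  suffices h : Wfil m n ≤ (Wfil θ (L * n)).comap (FreeAlgebra.lift ℂ y).toLinearMap from h ht
  refine Submodule.span_le.2 ?_
  rintro _ ⟨w, hw, rfl⟩
  refine Wfil_mono (Nat.mul_le_mul_left L hw) ?_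
  clear hw
  induction w with
  | nil => exact wordElem_nil (θ := m) ▸ map_one (FreeAlgebra.lift ℂ y) ▸
      wordElem_mem_Wfil (w := []) (by simp)
  | cons a w ih =>
    rw [wordElem_cons, AlgHom.toLinearMap_apply, map_mul, lift_gen, List.length_cons,
      Nat.mul_succ, add_comm]
    exact mul_mem_Wfil (hL a) ih

lemma finrank_map_mkQ_relations_le {L : ℕ} (hL : ∀ a, y a ∈ Wfil θ L) (n : ℕ) :
    Module.finrank ℂ ((Wfil m n).map (relations I y).mkQ)
      ≤ Module.finrank ℂ ((Wfil θ (L * n)).map I.mkQ) := by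
  rw [← ((Wfil m n).map (relations I y).mkQ).equivMapOfInjective _
    relationsMap_injective |>.symm.finrank_eq, ← Submodule.map_comp, relationsMap_comp_mkQ,
    Submodule.map_comp]
  refine Submodule.finrank_mono (Submodule.map_mono ?_)
  rintro _ ⟨t, ht, rfl⟩
  exact lift_mem_Wfil hL ht

lemma finrank_map_mkQ_anti {J K : Submodule ℂ (TV θ)} (h : J ≤ K) (n : ℕ) :
    Module.finrank ℂ ((Wfil θ n).map K.mkQ) ≤ Module.finrank ℂ ((Wfil θ n).map J.mkQ) := by
  rw [← Submodule.factor_comp_mk h, Submodule.map_comp]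
  exact Submodule.finrank_map_le _ _

theorem finiteRootSystem_degBraiding (hAAH : AAH) (hI : IsPreNicholsIdeal S I) (hGK : FinGK I)
    (hy : ∀ a, y a ∈ homogD θ (d a)) (hp : ∀ a, IsPrimitiveIn S (y a))
    (hind : Disjoint (Wfil m 1) (relations I y)) : FiniteRootSystem (degBraiding q d) := by
  let S' := braidedStr (degBraiding q d)
  refine hAAH m _ S' ?_
  have hle : lead (relations I y) ≤ Jq S' :=
    le_sSup (isPreNicholsIdeal_lead_relations hI S' hy hp hind)
  choose l hl using fun a => exists_mem_Wfil (y a)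
  set L := ∑ a, l a
  have hL : ∀ a, y a ∈ Wfil θ L := fun a =>
    Wfil_mono (Finset.single_le_sum (fun _ _ => Nat.zero_le _) (Finset.mem_univ a)) (hl a)
  obtain ⟨C, e, hC⟩ := hGK
  refine ⟨C * (L + 1) ^ e, e, fun n => ?_⟩
  calc _ ≤ _ := finrank_map_mkQ_anti hle n
    _ ≤ _ := finrank_map_mkQ_lead_le _ n
    _ ≤ _ := finrank_map_mkQ_relations_le hL n
    _ ≤ C * (L * n + 1) ^ e := hC _
    _ ≤ C * ((L + 1) * (n + 1)) ^ e := by gcongr; nlinarith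
    _ = _ := by rw [mul_pow, mul_assoc]

lemma exists_eq_of_mem_Wfil_one {t : TV m} (ht : t ∈ Wfil m 1) :
    ∃ (c : ℂ) (g : Fin m → ℂ), t = c • (1 : TV m) + ∑ a, g a • gen m a := by
  have h : Wfil m 1 ≤ Submodule.span ℂ {1} ⊔ Submodule.span ℂ (Set.range (gen m)) := by
    refine Submodule.span_le.2 ?_
    rintro _ ⟨w, hw, rfl⟩
    match w, hw with
    | [], _ => exact Submodule.mem_sup_left (Submodule.mem_span_singleton_self _)
    | [a], _ =>
      exact Submodule.mem_sup_right (Submodule.subset_span ⟨a, (wordElem_singleton a).symm⟩)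
  obtain ⟨_, hc, _, hg, rfl⟩ := Submodule.mem_sup.1 (h ht)
  obtain ⟨c, rfl⟩ := Submodule.mem_span_singleton.1 hc
  obtain ⟨g, rfl⟩ := (Submodule.mem_span_range_iff_exists_fun ℂ).1 hg
  exact ⟨c, g, rfl⟩

lemma disjoint_Wfil_one_relations (h : ∀ (c : ℂ) (g : Fin m → ℂ),
    c • (1 : TV θ) + ∑ a, g a • y a ∈ I → c = 0 ∧ g = 0) :
    Disjoint (Wfil m 1) (relations I y) := by
  refine Submodule.disjoint_def.2 fun t ht hI => ?_
  obtain ⟨c, g, rfl⟩ := exists_eq_of_mem_Wfil_one ht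
  obtain ⟨rfl, rfl⟩ := h c g (by simpa [mem_relations, lift_gen] using hI)
  simp

end Transfer

section CartanEntries

/-- The set whose minimum is the opposite of a Cartan entry, in terms of the label `α` of the
vertex and the label `p` of the edge. -/
def cartanSet (α p : ℂ) : Set ℕ := {n | qnum α (n + 1) * (1 - α ^ n * p) = 0}

/-- The opposite of a Cartan entry, in terms of the label `α` of the vertex and the label `p` of
the edge. -/
def cartanNum (α p : ℂ) : ℕ := sInf (cartanSet α p)

/-- The vertex label `α` is not of Cartan type with respect to the edge label `p`: the opposite
`n` of the Cartan entry comes from the order of `α`, and no power of `α` inverts `p`. -/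
structure NonCartan (α p : ℂ) (n : ℕ) : Prop where
  edge_ne_zero : p ≠ 0
  ne_one : α ≠ 1
  isPrimitiveRoot : IsPrimitiveRoot α (n + 1)
  pow_mul_ne_one : ∀ m, α ^ m * p ≠ 1

lemma qnum_eq_zero_iff {α : ℂ} {n : ℕ} : qnum α (n + 1) = 0 ↔ α ≠ 1 ∧ α ^ (n + 1) = 1 := by
  rcases eq_or_ne α 1 with rfl | hα
  · simp [qnum, Nat.cast_add_one_ne_zero]
  · rw [qnum, geom_sum_eq hα]
    simp [hα, sub_eq_zero]

lemma mem_cartanSet {α p : ℂ} {n : ℕ} :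
    n ∈ cartanSet α p ↔ (α ≠ 1 ∧ α ^ (n + 1) = 1) ∨ α ^ n * p = 1 := by
  rw [cartanSet, Set.mem_ofPred_eq, mul_eq_zero, qnum_eq_zero_iff, sub_eq_zero,
    eq_comm (a := (1 : ℂ))]

lemma le_cartanNum {α p : ℂ} {n : ℕ} (h : (cartanSet α p).Nonempty)
    (hn : ∀ m < n, m ∉ cartanSet α p) : n ≤ cartanNum α p := by
  by_contra! hlt
  exact hn _ hlt (Nat.sInf_mem h)

lemma cartanNum_eq {α p : ℂ} {n : ℕ} (h : n ∈ cartanSet α p)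
    (hn : ∀ m < n, m ∉ cartanSet α p) : cartanNum α p = n :=
  le_antisymm (Nat.sInf_le h) (le_cartanNum ⟨n, h⟩ hn)

lemma cartanNum_one_right (α : ℂ) : cartanNum α 1 = 0 :=
  cartanNum_eq (mem_cartanSet.2 (.inr (by simp))) (by simp)

lemma NonCartan.cartanNum_eq {α p : ℂ} {n : ℕ} (h : NonCartan α p n) : cartanNum α p = n :=
  PreNicholsPaper.cartanNum_eq (mem_cartanSet.2 (.inl ⟨h.ne_one, h.isPrimitiveRoot.pow_eq_one⟩))
    fun m hm hmem => by
      rcases mem_cartanSet.1 hmem with ⟨-, h'⟩ | h'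
      · exact h.isPrimitiveRoot.pow_ne_one_of_pos_of_lt m.succ_ne_zero (by lia) h'
      · exact h.pow_mul_ne_one m h'

lemma pow_cartanNum_mul_eq_one_or_nonCartan {α p : ℂ} (hp : p ≠ 0)
    (h : (cartanSet α p).Nonempty) :
    α ^ cartanNum α p * p = 1 ∨ NonCartan α p (cartanNum α p) := by
  refine or_iff_not_imp_left.2 fun hc => ?_
  have hlt : ∀ m < cartanNum α p, m ∉ cartanSet α p := fun m => Nat.notMem_of_lt_sInf
  obtain ⟨hα, hpow⟩ : α ≠ 1 ∧ α ^ (cartanNum α p + 1) = 1 :=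
    (mem_cartanSet.1 (Nat.sInf_mem h)).resolve_right hc
  refine ⟨hp, hα, IsPrimitiveRoot.mk_of_lt α (Nat.succ_pos _) hpow fun m hm0 hm hm1 => ?_,
    fun m hm => ?_⟩
  · obtain ⟨m, rfl⟩ := Nat.exists_eq_succ_of_ne_zero hm0.ne'
    exact hlt m (by lia) (mem_cartanSet.2 (.inl ⟨hα, hm1⟩))
  · rw [pow_eq_pow_mod m hpow] at hm
    rcases (Nat.le_of_lt_succ (Nat.mod_lt m (Nat.succ_pos (cartanNum α p)))).lt_or_eq with h' | h'
    · exact hlt _ h' (mem_cartanSet.2 (.inr hm))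
    · exact hc (h' ▸ hm)

lemma NonCartan.reflect {α p : ℂ} {n : ℕ} (h : NonCartan α p n) :
    NonCartan α (α ^ 2 / p) n := by
  have hα : α ≠ 0 := h.isPrimitiveRoot.ne_zero n.succ_ne_zero
  refine ⟨div_ne_zero (pow_ne_zero 2 hα) h.edge_ne_zero, h.ne_one, h.isPrimitiveRoot,
    fun m hm => h.pow_mul_ne_one (n * (m + 2)) ?_⟩
  have hp : p = α ^ (m + 2) := by
    rw [mul_div_assoc', div_eq_one_iff_eq h.edge_ne_zero] at hm
    rw [← hm, pow_add]
  rw [hp, ← pow_add, ← Nat.succ_mul, pow_mul, h.isPrimitiveRoot.pow_eq_one, one_pow]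

variable {θ : ℕ} (q : Fin θ → Fin θ → ℂˣ)

lemma cSet_eq (i j : Fin θ) : cSet q i j = cartanSet (q i i) (qtil q i j) := rfl

lemma cij_of_ne {i j : Fin θ} (h : i ≠ j) :
    cij q i j = -(cartanNum (q i i) (qtil q i j) : ℤ) :=
  if_neg h

lemma cij_self (i : Fin θ) : cij q i i = 2 := if_pos rfl

lemma qtil_comm (i j : Fin θ) : qtil q i j = qtil q j i := mul_comm _ _

lemma qtil_ne_zero (i j : Fin θ) : qtil q i j ≠ 0 := by
  simp [qtil]

lemma sRefl_of_ne {i k : Fin θ} (h : k ≠ i) (β : Fin θ → ℤ) : sRefl q i β k = β k := by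
  simp [sRefl, h]

lemma reflectMat_self (i : Fin θ) : reflectMat q i i i = q i i := by
  simp only [reflectMat, cij_self]
  group

lemma qtil_reflectMat_self {i j : Fin θ} (h : i ≠ j) :
    qtil (reflectMat q i) i j
      = (qtil q i j)⁻¹ * ((q i i : ℂ) ^ (2 * cartanNum (q i i) (qtil q i j)))⁻¹ := by
  simp only [qtil, reflectMat, cij_self, cij_of_ne q h]
  generalize cartanNum _ _ = n
  rw [show (2 : ℤ) * -(n : ℤ) = -((2 * n : ℕ) : ℤ) by push_cast; ring,
    show -(n : ℤ) * 2 = -((2 * n : ℕ) : ℤ) by push_cast; ring]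
  simp only [neg_neg, zpow_neg, zpow_natCast, zpow_ofNat]
  push_cast
  field_simp
  ring

lemma reflectMat_diag {i j : Fin θ} (h : i ≠ j) :
    (reflectMat q i j j : ℂ) = q j j * qtil q i j ^ cartanNum (q i i) (qtil q i j) *
      (q i i : ℂ) ^ (cartanNum (q i i) (qtil q i j) * cartanNum (q i i) (qtil q i j)) := by
  simp only [reflectMat, cij_of_ne q h, neg_neg, neg_mul_neg, ← Nat.cast_mul, zpow_natCast]
  generalize cartanNum _ _ = n
  push_cast [qtil]
  ring

lemma qtil_reflectMat {i j k : Fin θ} (hj : i ≠ j) (hk : i ≠ k) :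
    qtil (reflectMat q i) j k = qtil q j k * qtil q i j ^ cartanNum (q i i) (qtil q i k) *
      qtil q i k ^ cartanNum (q i i) (qtil q i j) * (q i i : ℂ) ^
        (2 * (cartanNum (q i i) (qtil q i j) * cartanNum (q i i) (qtil q i k))) := by
  simp only [qtil, reflectMat, cij_of_ne q hj, cij_of_ne q hk, neg_neg, neg_mul_neg,
    ← Nat.cast_mul, zpow_natCast]
  push_cast
  ring

end CartanEntries

section RankTwo

/-- Pairs of opposites of Cartan entries forcing a rank two root system to be infinite. -/
def BigPair (a b : ℕ) : Prop := (2 ≤ a ∧ 2 ≤ b) ∨ (1 ≤ a ∧ 4 ≤ b) ∨ (4 ≤ a ∧ 1 ≤ b)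

/-- The invariant of an alternating sequence of rank two reflections: `u` and `v` are the
coordinates of the current root, `v` being the one changed by the last reflection, whose Cartan
entry is `-c`. -/
def Growing (c : ℕ) (u v : ℤ) : Prop :=
  0 ≤ u ∧ 1 ≤ v ∧ (4 ≤ c → 2 * u + 1 ≤ v) ∧ (2 ≤ c → u + 1 ≤ v) ∧ u + 1 ≤ 2 * v

lemma BigPair.symm {a b : ℕ} (h : BigPair a b) : BigPair b a := by
  unfold BigPair at *
  lia

lemma Growing.step {c c' : ℕ} {u v : ℤ} (h : Growing c u v) (hc : BigPair c c') :
    Growing c' v (c' * v - u) ∧ u + v < v + (c' * v - u) := by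
  obtain ⟨_, h1, h2, h3, h4⟩ := h
  have hm : ∀ k : ℕ, k ≤ c' → (k : ℤ) * v ≤ c' * v := fun k hk =>
    mul_le_mul_of_nonneg_right (by exact_mod_cast hk) (by lia)
  have hm1 := hm 1
  have hm2 := hm 2
  have hm4 := hm 4
  push_cast at hm1 hm2 hm4
  generalize (c' : ℤ) * v = w at *
  unfold BigPair at hc
  unfold Growing
  lia

/-- A family of Dynkin diagrams of rank two, given by the labels of the first vertex, the edge and
the second vertex, which is symmetric and stable under reflections. -/
structure ReflClosed (D : ℂ → ℂ → ℂ → Prop) : Prop where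
  symm : ∀ {α p β}, D α p β → D β p α
  refl : ∀ {α p β n}, D α p β → NonCartan α p n → D α (α ^ 2 / p) (β * α * p ^ n)

variable {D : ℂ → ℂ → ℂ → Prop} {q : Fin 2 → Fin 2 → ℂˣ}

lemma reflectMat_of_nonCartan {θ : ℕ} (q : Fin θ → Fin θ → ℂˣ) {i j : Fin θ} (hij : i ≠ j) {n : ℕ}
    (h : NonCartan (q i i) (qtil q i j) n) :
    qtil (reflectMat q i) i j = (q i i : ℂ) ^ 2 / qtil q i j ∧
      (reflectMat q i j j : ℂ) = q j j * q i i * qtil q i j ^ n := by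
  have hpow := h.isPrimitiveRoot.pow_eq_one
  rw [reflectMat_diag q hij, qtil_reflectMat_self q hij, h.cartanNum_eq]
  constructor
  · have : (q i i : ℂ) ^ (2 * n) * (q i i : ℂ) ^ 2 = 1 := by
      rw [← pow_add, ← mul_add_one, pow_mul', hpow, one_pow]
    rw [inv_eq_of_mul_eq_one_right this, div_eq_inv_mul]
  · have : (q i i : ℂ) ^ (n * n) * (q i i : ℂ) ^ n = q i i * (q i i : ℂ) ^ n := by
      rw [← pow_add, ← pow_succ', ← Nat.mul_succ, pow_mul', hpow, one_pow]
    rw [mul_right_cancel₀ (pow_ne_zero _ (q i i).ne_zero) this, mul_right_comm]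

lemma reflectMat_of_cartan {θ : ℕ} (q : Fin θ → Fin θ → ℂˣ) {i j : Fin θ} (hij : i ≠ j)
    (h : (q i i : ℂ) ^ cartanNum (q i i) (qtil q i j) * qtil q i j = 1) :
    qtil (reflectMat q i) i j = qtil q i j ∧ (reflectMat q i j j : ℂ) = q j j := by
  rw [reflectMat_diag q hij, qtil_reflectMat_self q hij]
  constructor
  · rw [pow_mul', eq_div_of_mul_eq (qtil_ne_zero q i j) h]
    field_simp [qtil_ne_zero q i j]
  · rw [pow_mul, mul_assoc, ← mul_pow, mul_comm (qtil q i j), h, one_pow, mul_one]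

lemma ReflClosed.reflect (hD : ReflClosed D) {i j : Fin 2} (hij : i ≠ j)
    (hq : D (q i i) (qtil q i j) (q j j)) (hr : reflectable q i) :
    D (reflectMat q i i i) (qtil (reflectMat q i) i j) (reflectMat q i j j) ∧
      cartanNum (reflectMat q i i i) (qtil (reflectMat q i) i j)
        = cartanNum (q i i) (qtil q i j) := by
  rw [reflectMat_self]
  rcases pow_cartanNum_mul_eq_one_or_nonCartan (qtil_ne_zero q i j) (hr j hij.symm) with h | h
  · obtain ⟨hp, hβ⟩ := reflectMat_of_cartan q hij h
    rw [hp, hβ]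
    exact ⟨hq, rfl⟩
  · obtain ⟨hp, hβ⟩ := reflectMat_of_nonCartan q hij h
    rw [hp, hβ, h.reflect.cartanNum_eq]
    exact ⟨hD.refl hq h, rfl⟩

lemma sum_eq_add_of_ne {i j : Fin 2} (hij : i ≠ j) (β : Fin 2 → ℤ) : ∑ k, β k = β i + β j :=
  Fintype.sum_eq_add i j hij (by lia)

lemma sRefl_self_of_ne {i j : Fin 2} (hij : i ≠ j) (β : Fin 2 → ℤ) :
    sRefl q i β i = cartanNum (q i i) (qtil q i j) * β j - β i := by
  rw [sRefl, if_pos rfl, sum_eq_add_of_ne hij fun k => cij q i k * β k, cij_self,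
    cij_of_ne q hij]
  ring

lemma ReflClosed.exists_growing (hD : ReflClosed D)
    (hbig : ∀ α p β, D α p β → (cartanSet α p).Nonempty → (cartanSet β p).Nonempty →
      BigPair (cartanNum α p) (cartanNum β p))
    (hq : D (q 0 0) (qtil q 0 1) (q 1 1))
    (hr : ∀ q' i, (∃ β, ReachRoot q q' β) → reflectable q' i) (N : ℕ) :
    ∃ i j q' β, i ≠ j ∧ ReachRoot q q' β ∧ D (q' i i) (qtil q' i j) (q' j j) ∧
      Growing (cartanNum (q' j j) (qtil q' i j)) (β i) (β j) ∧ (N : ℤ) < ∑ k, β k := by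
  induction N with
  | zero => exact ⟨0, 1, q, _, by decide, .simple 1, hq, by simp [Growing], by simp⟩
  | succ N ih =>
    obtain ⟨i, j, q', β, hij, hβ, hD', hg, hN⟩ := ih
    have hpair := hbig _ _ _ hD' (hr q' i ⟨β, hβ⟩ j hij.symm)
      (qtil_comm q' j i ▸ hr q' j ⟨β, hβ⟩ i hij)
    obtain ⟨hstep, hlt⟩ := hg.step hpair.symm
    obtain ⟨hrD, hrc⟩ := hD.reflect hij hD' (hr q' i ⟨β, hβ⟩)
    rw [sum_eq_add_of_ne hij] at hN
    refine ⟨j, i, reflectMat q' i, sRefl q' i β, hij.symm, hβ.reflect i, ?_, ?_, ?_⟩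
    · exact qtil_comm (reflectMat q' i) i j ▸ hD.symm hrD
    · rwa [qtil_comm, hrc, sRefl_self_of_ne hij, sRefl_of_ne q' hij.symm]
    · rw [sum_eq_add_of_ne hij.symm, sRefl_self_of_ne hij, sRefl_of_ne q' hij.symm]
      push_cast
      lia

theorem ReflClosed.not_finiteRootSystem (hD : ReflClosed D)
    (hbig : ∀ α p β, D α p β → (cartanSet α p).Nonempty → (cartanSet β p).Nonempty →
      BigPair (cartanNum α p) (cartanNum β p))
    (hq : D (q 0 0) (qtil q 0 1) (q 1 1)) : ¬FiniteRootSystem q := by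
  rintro ⟨hr, hfin⟩
  obtain ⟨M, hM⟩ := (hfin.image fun β => ∑ k, β k).bddAbove
  obtain ⟨i, j, q', β, -, hβ, -, -, hlt⟩ := hD.exists_growing hbig hq hr M.toNat
  have hle : ∑ k, β k ≤ M := hM ⟨β, ⟨q', hβ⟩, rfl⟩
  have := Int.self_le_toNat M
  lia

end RankTwo

section Families

lemma one_le_cartanNum {α p : ℂ} (h : (cartanSet α p).Nonempty) (hp : p ≠ 1) :
    1 ≤ cartanNum α p := by
  refine le_cartanNum h fun m hm hmem => ?_
  obtain rfl : m = 0 := by lia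
  simp_all [mem_cartanSet]

lemma two_le_cartanNum {α p : ℂ} (h : (cartanSet α p).Nonempty) (hp : p ≠ 1) (hα : α ≠ -1)
    (hαp : α * p ≠ 1) : 2 ≤ cartanNum α p := by
  refine le_cartanNum h fun m hm hmem => ?_
  interval_cases m <;> simp_all [mem_cartanSet]

lemma four_le_cartanNum {α p : ℂ} (h : (cartanSet α p).Nonempty) (hp : p ≠ 1) (hp6 : p ^ 6 = 1)
    (h12 : α ^ 12 ≠ 1) (h18 : α ^ 18 ≠ 1) : 4 ≤ cartanNum α p := by
  refine le_cartanNum h fun m hm hmem => ?_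
  rcases mem_cartanSet.1 hmem with ⟨hα, hpow⟩ | hmul
  · interval_cases m <;> grind
  · have hpow : (α ^ m) ^ 6 * p ^ 6 = 1 := by rw [← mul_pow, hmul, one_pow]
    interval_cases m <;> grind

lemma not_finiteRootSystem_of_family {F : ℂ → ℂ → ℂ → Prop}
    (hleft : ∀ α p β n, F α p β → NonCartan α p n → F α (α ^ 2 / p) (β * α * p ^ n))
    (hright : ∀ α p β n, F β p α → NonCartan α p n → F (β * α * p ^ n) (α ^ 2 / p) α)
    (hbig : ∀ α p β, F α p β → p ≠ 1 ∧ α ≠ -1 ∧ β ≠ -1 ∧ α * p ≠ 1 ∧ β * p ≠ 1)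
    {q : Fin 2 → Fin 2 → ℂˣ} (hq : F (q 0 0) (qtil q 0 1) (q 1 1)) : ¬FiniteRootSystem q := by
  refine ReflClosed.not_finiteRootSystem (D := fun α p β => F α p β ∨ F β p α)
    ⟨fun h => h.symm, fun h hn => h.imp (hleft _ _ _ _ · hn) (hright _ _ _ _ · hn)⟩ ?_ (.inl hq)
  rintro α p β (h | h) hα hβ <;> obtain ⟨h1, h2, h3, h4, h5⟩ := hbig _ _ _ h
  · exact .inl ⟨two_le_cartanNum hα h1 h2 h4, two_le_cartanNum hβ h1 h3 h5⟩
  · exact .inl ⟨two_le_cartanNum hα h1 h3 h5, two_le_cartanNum hβ h1 h2 h4⟩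

lemma not_finiteRootSystem_of_reflection_fixed {q : Fin 2 → Fin 2 → ℂˣ}
    (hleft : ∀ n, NonCartan (q 0 0) (qtil q 0 1) n →
      (q 0 0 : ℂ) ^ 2 / qtil q 0 1 = qtil q 0 1 ∧ (q 1 1 : ℂ) * q 0 0 * qtil q 0 1 ^ n = q 1 1)
    (hright : ∃ m, (q 1 1 : ℂ) ^ m * qtil q 0 1 = 1)
    (hbig : qtil q 0 1 ≠ 1 ∧ (q 0 0 : ℂ) ≠ -1 ∧ (q 1 1 : ℂ) ≠ -1 ∧
      (q 0 0 : ℂ) * qtil q 0 1 ≠ 1 ∧ (q 1 1 : ℂ) * qtil q 0 1 ≠ 1) : ¬FiniteRootSystem q := by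
  refine not_finiteRootSystem_of_family
    (F := fun α p β => α = q 0 0 ∧ p = qtil q 0 1 ∧ β = q 1 1) ?_ ?_ ?_ ⟨rfl, rfl, rfl⟩
  · rintro _ _ _ n ⟨rfl, rfl, rfl⟩ hn
    exact ⟨rfl, hleft n hn⟩
  · rintro _ _ _ n ⟨rfl, rfl, rfl⟩ hn
    exact absurd hright.choose_spec (hn.pow_mul_ne_one _)
  · rintro _ _ _ ⟨rfl, rfl, rfl⟩
    exact hbig

/-- The family of rank two diagrams, given up to exchanging the two vertices, whose labels have
sixth powers `(1, 1, R)` or `(R, R², R)`. -/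
def SixthPowers (R α p β : ℂ) : Prop :=
  (α ^ 6 = 1 ∧ p ^ 6 = 1 ∧ p ≠ 1 ∧ β ^ 6 = R) ∨ (β ^ 6 = 1 ∧ p ^ 6 = 1 ∧ p ≠ 1 ∧ α ^ 6 = R) ∨
    (α ^ 6 = R ∧ β ^ 6 = R ∧ p ^ 6 = R ^ 2)

lemma reflClosed_sixthPowers (R : ℂ) : ReflClosed (SixthPowers R) := by
  refine ⟨fun h => ?_, fun {α p β n} h hn => ?_⟩
  · unfold SixthPowers at *
    tauto
  have hedge : α ^ 2 / p ≠ 1 := by simpa using hn.reflect.pow_mul_ne_one 0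
  have hvertex6 : (β * α * p ^ n) ^ 6 = β ^ 6 * α ^ 6 * (p ^ 6) ^ n := by ring
  have hedge6 : (α ^ 2 / p) ^ 6 = (α ^ 6) ^ 2 / p ^ 6 := by ring
  simp only [SixthPowers, hvertex6, hedge6]
  rcases h with ⟨hα, hp, -, hβ⟩ | ⟨hβ, hp, -, hα⟩ | ⟨hα, hβ, hp⟩
  · simp [*]
  · simp [*]
  · have hR : R ^ (n + 1) = 1 := by
      rw [← hα, pow_right_comm, hn.isPrimitiveRoot.pow_eq_one, one_pow]
    have hR0 : R ≠ 0 := by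
      rintro rfl
      simp at hR
    refine .inr (.inl ⟨?_, ?_, hedge, hα⟩)
    · rw [hα, hβ, hp]
      linear_combination (R ^ (n + 1) + 1) * hR
    · rw [hα, hp, div_self (pow_ne_zero _ hR0)]

lemma SixthPowers.bigPair {R α p β : ℂ} (h : SixthPowers R α p β) (h2 : R ^ 2 ≠ 1)
    (h3 : R ^ 3 ≠ 1) (hα : (cartanSet α p).Nonempty) (hβ : (cartanSet β p).Nonempty) :
    BigPair (cartanNum α p) (cartanNum β p) := by
  rcases h with ⟨-, hp6, hp, hβ6⟩ | ⟨-, hp6, hp, hα6⟩ | ⟨hα6, hβ6, hp6⟩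
  · exact .inr (.inl ⟨one_le_cartanNum hα hp, four_le_cartanNum hβ hp hp6 (by grind) (by grind)⟩)
  · exact .inr (.inr ⟨four_le_cartanNum hα hp hp6 (by grind) (by grind), one_le_cartanNum hβ hp⟩)
  · have hp : p ≠ 1 := by grind
    have hvertex : ∀ γ : ℂ, γ ^ 6 = R → γ ≠ -1 ∧ γ * p ≠ 1 := by
      refine fun γ hγ => ⟨by grind, fun h => h3 ?_⟩
      rw [pow_succ', ← hp6, ← hγ, ← mul_pow, h, one_pow]
    exact .inl ⟨two_le_cartanNum hα hp (hvertex α hα6).1 (hvertex α hα6).2,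
      two_le_cartanNum hβ hp (hvertex β hβ6).1 (hvertex β hβ6).2⟩

lemma not_finiteRootSystem_of_pow_six {q : Fin 2 → Fin 2 → ℂˣ} (h0 : (q 0 0 : ℂ) ^ 6 = 1)
    (hp : qtil q 0 1 ^ 6 = 1) (hp1 : qtil q 0 1 ≠ 1) (h12 : (q 1 1 : ℂ) ^ 12 ≠ 1)
    (h18 : (q 1 1 : ℂ) ^ 18 ≠ 1) : ¬FiniteRootSystem q :=
  (reflClosed_sixthPowers ((q 1 1 : ℂ) ^ 6)).not_finiteRootSystem
    (fun _ _ _ h => h.bigPair (by rwa [← pow_mul]) (by rwa [← pow_mul])) (.inl ⟨h0, hp, hp1, rfl⟩)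

lemma not_finiteRootSystem_of_pow_nine {q : Fin 2 → Fin 2 → ℂˣ} (h0 : (q 0 0 : ℂ) ^ 9 = 1)
    (hp : qtil q 0 1 ^ 9 = -1) (h1 : (q 1 1 : ℂ) ^ 9 = 1) : ¬FiniteRootSystem q := by
  have heven : ∀ {α p : ℂ} {n : ℕ}, α ^ 9 = 1 → NonCartan α p n → Even n := fun {α p n} h9 hn => by
    obtain ⟨c, hc⟩ := hn.isPrimitiveRoot.dvd_of_pow_eq_one 9 h9
    have hodd : Odd (n + 1) := Nat.Odd.of_mul_left (n := c) (hc ▸ by decide)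
    simpa [Nat.odd_add_one] using hodd
  have hvertex : ∀ (α β p : ℂ) (n : ℕ), (β * α * p ^ n) ^ 9 = β ^ 9 * α ^ 9 * (p ^ 9) ^ n := by
    intros
    ring
  have hedge : ∀ α p : ℂ, (α ^ 2 / p) ^ 9 = (α ^ 9) ^ 2 / p ^ 9 := by
    intros
    ring
  refine not_finiteRootSystem_of_family (F := fun α p β => α ^ 9 = 1 ∧ p ^ 9 = -1 ∧ β ^ 9 = 1)
    ?_ ?_ ?_ ⟨h0, hp, h1⟩
  · rintro α p β n ⟨hα, hp, hβ⟩ hn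
    simp [hvertex, hedge, hα, hp, hβ, (heven hα hn).neg_one_pow]
  · rintro α p β n ⟨hβ, hp, hα⟩ hn
    simp [hvertex, hedge, hα, hp, hβ, (heven hα hn).neg_one_pow]
  · rintro α p β ⟨hα, hp, hβ⟩
    refine ⟨?_, ?_, ?_, ?_, ?_⟩ <;> grind

end Families

section CubeRoots

variable {ζ : ℂ}

lemma quadratic_of_isPrimitiveRoot_three (hζ : IsPrimitiveRoot ζ 3) : ζ ^ 2 + ζ + 1 = 0 := by
  have h := hζ.geom_sum_eq_zero (by norm_num)
  simp only [Finset.sum_range_succ, Finset.sum_range_zero] at h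
  linear_combination h

lemma isPrimitiveRoot_four_of_sq_eq_neg_one {s : ℂ} (hs : s ^ 2 = -1) : IsPrimitiveRoot s 4 := by
  refine IsPrimitiveRoot.mk_of_lt s (by norm_num) (by grind) fun m hm0 hm => ?_
  interval_cases m <;> grind

lemma eq_of_cube_eq_one (hζ : IsPrimitiveRoot ζ 3) {t : ℂ} (ht : t ^ 3 = 1) :
    t = 1 ∨ t = ζ ∨ t = ζ ^ 2 := by
  obtain ⟨n, hn, rfl⟩ := hζ.eq_pow_of_pow_eq_one ht
  interval_cases n <;> simp

lemma NonCartan.eq_of_isPrimitiveRoot {α p : ℂ} {n l : ℕ} (h : NonCartan α p n)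
    (hα : IsPrimitiveRoot α (l + 1)) : n = l :=
  Nat.succ_injective (h.isPrimitiveRoot.unique hα)

lemma pow_eq_one_of_cube_eq_one (hζ : IsPrimitiveRoot ζ 3) {s : ℂ} (hs : ∀ m, s ^ m * ζ ≠ 1)
    {a : ℕ} (h : (s ^ a) ^ 3 = 1) : s ^ a = 1 := by
  have hζ3 := hζ.pow_eq_one
  rcases eq_of_cube_eq_one hζ h with h | h | h
  · exact h
  · exact absurd (by rw [pow_mul, h]; linear_combination hζ3) (hs (a * 2))
  · exact absurd (by rw [h]; linear_combination hζ3) (hs a)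

lemma pow_eq_neg_one_of_cube_eq_neg_one (hζ : IsPrimitiveRoot ζ 3) {r : ℂ}
    (hr : ∀ m, r ^ m * -ζ ≠ 1) {a : ℕ} (h : (r ^ a) ^ 3 = -1) : r ^ a = -1 := by
  have hζ3 := hζ.pow_eq_one
  rcases eq_of_cube_eq_one hζ (t := -r ^ a) (by rw [neg_pow, h]; norm_num) with h | h | h <;>
    rw [neg_eq_iff_eq_neg] at h
  · exact h
  · exact absurd (by rw [pow_mul, h]; linear_combination (ζ ^ 3 + 1) * hζ3) (hr (a * 5))
  · exact absurd (by rw [h]; linear_combination hζ3) (hr a)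

lemma sq_eq_neg_one_of_pow_mul_ne (hζ : IsPrimitiveRoot ζ 3) {s : ℂ} (hs : ∀ m, s ^ m * ζ ≠ 1)
    (hs1 : s ≠ 1) (hsn : s ≠ -1) (h : s ^ 12 = 1 ∨ s ^ 18 = 1) : s ^ 2 = -1 := by
  have h12 : s ^ 12 = 1 := h.elim id fun h18 => by
    have h6 := pow_eq_one_of_cube_eq_one hζ hs (a := 6) (by rw [← pow_mul, h18])
    linear_combination (s ^ 6 + 1) * h6
  have h4 := pow_eq_one_of_cube_eq_one hζ hs (a := 4) (by rw [← pow_mul, h12])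
  have h2 : s ^ 2 ≠ 1 := by simp [sq_eq_one_iff, hs1, hsn]
  exact (sq_eq_one_iff.1 (show (s ^ 2) ^ 2 = 1 by rw [← pow_mul, h4])).resolve_left h2

lemma sq_eq_neg_one_of_pow_mul_neg_ne (hζ : IsPrimitiveRoot ζ 3) {r : ℂ}
    (hr : ∀ m, r ^ m * -ζ ≠ 1) (h9 : r ^ 9 ≠ 1) (hrn : r ≠ -1) (h : r ^ 12 = 1 ∨ r ^ 18 = 1) :
    r ^ 2 = -1 := by
  have cube := fun a => pow_eq_neg_one_of_cube_eq_neg_one hζ hr (a := a)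
  have hcube1 : r ^ 3 ≠ 1 := fun h3 => h9 (by rw [show 9 = 3 * 3 from rfl, pow_mul, h3, one_pow])
  have hcubeN : r ^ 3 ≠ -1 := fun h3 => hrn (by simpa using cube 1 (by simpa using h3))
  refine cube 2 ?_
  rw [← pow_mul]
  rcases h with h | h
  · refine (sq_eq_one_iff.1 (by rw [← pow_mul, h])).resolve_left fun h6 => ?_
    exact (sq_eq_one_iff.1 (show (r ^ 3) ^ 2 = 1 by rw [← pow_mul, h6])).elim hcube1 hcubeN
  · have hr9 : r ^ 9 = -1 := (sq_eq_one_iff.1 (by rw [← pow_mul, h])).resolve_left h9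
    exact absurd (cube 3 (by rw [← pow_mul, hr9])) hcubeN

variable {q : Fin 2 → Fin 2 → ℂˣ}

lemma not_finiteRootSystem_of_zeta_zeta_of_sq (hζ : IsPrimitiveRoot ζ 3) (h0 : (q 0 0 : ℂ) = ζ)
    (hp : qtil q 0 1 = ζ) (hs : (q 1 1 : ℂ) ^ 2 = -1) : ¬FiniteRootSystem q := by
  have hζ2 := quadratic_of_isPrimitiveRoot_three hζ
  have hζ0 := hζ.ne_zero (by norm_num)
  generalize hq1 : (q 1 1 : ℂ) = s at hs
  have hs0 : s ≠ 0 := hq1 ▸ (q 1 1).ne_zero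
  have hs4 := isPrimitiveRoot_four_of_sq_eq_neg_one hs
  refine not_finiteRootSystem_of_family (F := fun α p β =>
    s = β ∧ ((ζ = α ∧ ζ = p) ∨ (s * ζ = α ∧ -ζ ^ 2 = p))) ?_ ?_ ?_
      ⟨hq1.symm, .inl ⟨h0.symm, hp.symm⟩⟩
  · rintro _ _ _ n ⟨rfl, ⟨rfl, rfl⟩ | ⟨rfl, rfl⟩⟩ hn
    · exact absurd (by linear_combination hζ.pow_eq_one) (hn.pow_mul_ne_one 2)
    · exact absurd (by grind) (hn.pow_mul_ne_one 10)
  · rintro _ _ _ n ⟨rfl, ⟨rfl, rfl⟩ | ⟨rfl, rfl⟩⟩ hn <;> obtain rfl := hn.eq_of_isPrimitiveRoot hs4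
    · exact ⟨rfl, .inr ⟨by grind, by field_simp; grind⟩⟩
    · exact ⟨rfl, .inl ⟨by grind, by field_simp; grind⟩⟩
  · rintro _ _ _ ⟨rfl, ⟨rfl, rfl⟩ | ⟨rfl, rfl⟩⟩ <;> refine ⟨?_, ?_, ?_, ?_, ?_⟩ <;> grind

lemma label_of_finiteRootSystem_zeta_zeta (hζ : IsPrimitiveRoot ζ 3) (h0 : (q 0 0 : ℂ) = ζ)
    (hp : qtil q 0 1 = ζ) (hfin : FiniteRootSystem q) :
    (q 1 1 : ℂ) = -1 ∨ (q 1 1 : ℂ) = ζ ^ 2 := by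
  have hζ2 := quadratic_of_isPrimitiveRoot_three hζ
  have hζ3 := hζ.pow_eq_one
  have hζ1 := hζ.ne_one (by norm_num)
  by_contra! ⟨hs, hsζ⟩
  by_cases hC : ∃ m, (q 1 1 : ℂ) ^ m * ζ = 1
  · refine not_finiteRootSystem_of_reflection_fixed (fun n hn => ?_) (by rwa [hp]) ?_ hfin
    · exact absurd (by rw [h0, hp]; linear_combination hζ3) (hn.pow_mul_ne_one 2)
    · rw [h0, hp]
      refine ⟨hζ1, ?_, hs, ?_, ?_⟩ <;> grind
  push Not at hC
  have hs1 : (q 1 1 : ℂ) ≠ 1 := fun hs1 => by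
    obtain ⟨n, hn⟩ := hfin.1 q 1 ⟨_, .simple 0⟩ 0 (by decide)
    rw [cSet_eq, mem_cartanSet, hs1, qtil_comm, hp] at hn
    simp [hζ1] at hn
  by_cases h : (q 1 1 : ℂ) ^ 12 = 1 ∨ (q 1 1 : ℂ) ^ 18 = 1
  · exact not_finiteRootSystem_of_zeta_zeta_of_sq hζ h0 hp
      (sq_eq_neg_one_of_pow_mul_ne hζ hC hs1 hs h) hfin
  · push Not at h
    exact not_finiteRootSystem_of_pow_six (by grind) (by grind) (by rwa [hp]) h.1 h.2 hfin

lemma not_finiteRootSystem_of_zeta_neg_zeta_of_sq (hζ : IsPrimitiveRoot ζ 3)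
    (h0 : (q 0 0 : ℂ) = ζ) (hp : qtil q 0 1 = -ζ) (hr : (q 1 1 : ℂ) ^ 2 = -1) :
    ¬FiniteRootSystem q := by
  have hζ2 := quadratic_of_isPrimitiveRoot_three hζ
  have hζ0 := hζ.ne_zero (by norm_num)
  generalize hq1 : (q 1 1 : ℂ) = r at hr
  have hr0 : r ≠ 0 := hq1 ▸ (q 1 1).ne_zero
  have hr4 := isPrimitiveRoot_four_of_sq_eq_neg_one hr
  refine not_finiteRootSystem_of_family (F := fun α p β =>
    r = β ∧ ((ζ = α ∧ -ζ = p) ∨ (-(r * ζ) = α ∧ ζ ^ 2 = p))) ?_ ?_ ?_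
      ⟨hq1.symm, .inl ⟨h0.symm, hp.symm⟩⟩
  · rintro _ _ _ n ⟨rfl, ⟨rfl, rfl⟩ | ⟨rfl, rfl⟩⟩ hn
    · obtain rfl := hn.eq_of_isPrimitiveRoot hζ
      exact ⟨by grind, .inl ⟨rfl, by field_simp⟩⟩
    · exact absurd (by grind) (hn.pow_mul_ne_one 4)
  · rintro _ _ _ n ⟨rfl, ⟨rfl, rfl⟩ | ⟨rfl, rfl⟩⟩ hn <;> obtain rfl := hn.eq_of_isPrimitiveRoot hr4
    · exact ⟨rfl, .inr ⟨by grind, by field_simp; grind⟩⟩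
    · exact ⟨rfl, .inl ⟨by grind, by field_simp; grind⟩⟩
  · rintro _ _ _ ⟨rfl, ⟨rfl, rfl⟩ | ⟨rfl, rfl⟩⟩ <;> refine ⟨?_, ?_, ?_, ?_, ?_⟩ <;> grind

lemma label_of_finiteRootSystem_zeta_neg_zeta (hζ : IsPrimitiveRoot ζ 3) (h0 : (q 0 0 : ℂ) = ζ)
    (hp : qtil q 0 1 = -ζ) (hfin : FiniteRootSystem q) :
    (q 1 1 : ℂ) = -1 ∨ (q 1 1 : ℂ) = -ζ ^ 2 := by
  have hζ2 := quadratic_of_isPrimitiveRoot_three hζ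
  have hζ0 := hζ.ne_zero (by norm_num)
  have hζn : -ζ ≠ 1 := by grind
  by_contra! ⟨hr, hrζ⟩
  by_cases h9 : (q 1 1 : ℂ) ^ 9 = 1
  · exact not_finiteRootSystem_of_pow_nine (by grind) (by grind) h9 hfin
  by_cases hC : ∃ m, (q 1 1 : ℂ) ^ m * -ζ = 1
  · refine not_finiteRootSystem_of_reflection_fixed (fun n hn => ?_) (by rwa [hp]) ?_ hfin
    · obtain rfl := hn.eq_of_isPrimitiveRoot (h0 ▸ hζ)
      rw [h0, hp]
      exact ⟨by field_simp, by grind⟩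
    · rw [h0, hp]
      refine ⟨hζn, ?_, hr, ?_, ?_⟩ <;> grind
  push Not at hC
  by_cases h : (q 1 1 : ℂ) ^ 12 = 1 ∨ (q 1 1 : ℂ) ^ 18 = 1
  · exact not_finiteRootSystem_of_zeta_neg_zeta_of_sq hζ h0 hp
      (sq_eq_neg_one_of_pow_mul_neg_ne hζ hC h9 hr h) hfin
  · push Not at h
    exact not_finiteRootSystem_of_pow_six (by grind) (by grind) (by rwa [hp]) h.1 h.2 hfin

lemma not_finiteRootSystem_of_zeta_neg_one_neg_zeta (hζ : IsPrimitiveRoot ζ 3)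
    (h0 : (q 0 0 : ℂ) = ζ) (hp : qtil q 0 1 = -1) (h1 : (q 1 1 : ℂ) = -ζ) :
    ¬FiniteRootSystem q := by
  have hζ2 := quadratic_of_isPrimitiveRoot_three hζ
  have hζ0 := hζ.ne_zero (by norm_num)
  refine not_finiteRootSystem_of_family (F := fun α p β =>
    ζ = α ∧ ((-1 = p ∧ -ζ = β) ∨ (-ζ ^ 2 = p ∧ -ζ ^ 2 = β))) ?_ ?_ ?_
      ⟨h0.symm, .inl ⟨hp.symm, h1.symm⟩⟩
  · rintro _ _ _ n ⟨rfl, ⟨rfl, rfl⟩ | ⟨rfl, rfl⟩⟩ hn <;> obtain rfl := hn.eq_of_isPrimitiveRoot hζ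
    · exact ⟨rfl, .inr ⟨by simp [div_neg], by ring⟩⟩
    · exact ⟨rfl, .inl ⟨by field_simp, by grind⟩⟩
  · rintro _ _ _ n ⟨rfl, ⟨rfl, rfl⟩ | ⟨rfl, rfl⟩⟩ hn
    · exact absurd (by grind) (hn.pow_mul_ne_one 3)
    · exact absurd (by grind) (hn.pow_mul_ne_one 5)
  · rintro _ _ _ ⟨rfl, ⟨rfl, rfl⟩ | ⟨rfl, rfl⟩⟩ <;> refine ⟨?_, ?_, ?_, ?_, ?_⟩ <;> grind

end CubeRoots

section RankThree

/-- The Dynkin diagram `ζ² —ζ— ζ —(-ζ)— (-ζ²)` with middle vertex `0`, for `ζ` a primitive cube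
root of unity. It is stable under all reflections. -/
structure IsStarDiagram (ζ : ℂ) (q : Fin 3 → Fin 3 → ℂˣ) : Prop where
  vertex_zero : (q 0 0 : ℂ) = ζ
  vertex_one : (q 1 1 : ℂ) = ζ ^ 2
  vertex_two : (q 2 2 : ℂ) = -ζ ^ 2
  edge_zero_one : qtil q 0 1 = ζ
  edge_zero_two : qtil q 0 2 = -ζ
  edge_one_two : qtil q 1 2 = 1

namespace IsStarDiagram

variable {ζ : ℂ} {q : Fin 3 → Fin 3 → ℂˣ}

lemma cartanNum_zero (hζ : IsPrimitiveRoot ζ 3) (h : IsStarDiagram ζ q) :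
    cartanNum (q 0 0) (qtil q 0 1) = 2 ∧ cartanNum (q 0 0) (qtil q 0 2) = 2 := by
  have hζ2 := quadratic_of_isPrimitiveRoot_three hζ
  rw [h.vertex_zero, h.edge_zero_one, h.edge_zero_two]
  constructor <;>
    refine cartanNum_eq (mem_cartanSet.2 (.inl ⟨hζ.ne_one (by norm_num), hζ.pow_eq_one⟩))
      fun m hm => ?_ <;>
    rw [mem_cartanSet] <;> interval_cases m <;> grind

lemma cartanNum_one (hζ : IsPrimitiveRoot ζ 3) (h : IsStarDiagram ζ q) :
    cartanNum (q 1 1) (qtil q 1 0) = 1 ∧ cartanNum (q 1 1) (qtil q 1 2) = 0 := by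
  have hζ2 := quadratic_of_isPrimitiveRoot_three hζ
  rw [qtil_comm q 1 0, h.vertex_one, h.edge_zero_one, h.edge_one_two]
  refine ⟨cartanNum_eq (mem_cartanSet.2 (.inr (by grind))) fun m hm => ?_, cartanNum_one_right _⟩
  rw [mem_cartanSet]
  interval_cases m
  grind

lemma cartanNum_two (hζ : IsPrimitiveRoot ζ 3) (h : IsStarDiagram ζ q) :
    cartanNum (q 2 2) (qtil q 2 0) = 1 ∧ cartanNum (q 2 2) (qtil q 2 1) = 0 := by
  have hζ2 := quadratic_of_isPrimitiveRoot_three hζ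
  rw [qtil_comm q 2 0, qtil_comm q 2 1, h.vertex_two, h.edge_zero_two, h.edge_one_two]
  refine ⟨cartanNum_eq (mem_cartanSet.2 (.inr (by grind))) fun m hm => ?_, cartanNum_one_right _⟩
  rw [mem_cartanSet]
  interval_cases m
  grind

lemma reflect_zero (hζ : IsPrimitiveRoot ζ 3) (h : IsStarDiagram ζ q) :
    IsStarDiagram ζ (reflectMat q 0) := by
  have hζ2 := quadratic_of_isPrimitiveRoot_three hζ
  have hζ0 := hζ.ne_zero (by norm_num)
  obtain ⟨e1, e2⟩ := h.cartanNum_zero hζ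
  have h01 : (0 : Fin 3) ≠ 1 := by decide
  have h02 : (0 : Fin 3) ≠ 2 := by decide
  constructor
  · rw [reflectMat_self, h.vertex_zero]
  · rw [reflectMat_diag q h01, e1, h.vertex_zero, h.vertex_one, h.edge_zero_one]
    grind
  · rw [reflectMat_diag q h02, e2, h.vertex_zero, h.vertex_two, h.edge_zero_two]
    grind
  · rw [qtil_reflectMat_self q h01, e1, h.vertex_zero, h.edge_zero_one]
    grind
  · rw [qtil_reflectMat_self q h02, e2, h.vertex_zero, h.edge_zero_two]
    grind
  · rw [qtil_reflectMat q h01 h02, e1, e2, h.vertex_zero, h.edge_zero_one, h.edge_zero_two,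
      h.edge_one_two]
    grind

lemma reflect_one (hζ : IsPrimitiveRoot ζ 3) (h : IsStarDiagram ζ q) :
    IsStarDiagram ζ (reflectMat q 1) := by
  have hζ2 := quadratic_of_isPrimitiveRoot_three hζ
  have hζ0 := hζ.ne_zero (by norm_num)
  obtain ⟨e1, e2⟩ := h.cartanNum_one hζ
  have h10 : (1 : Fin 3) ≠ 0 := by decide
  have h12 : (1 : Fin 3) ≠ 2 := by decide
  have hedge : qtil q 1 0 = ζ := qtil_comm q 1 0 ▸ h.edge_zero_one
  constructor
  · rw [reflectMat_diag q h10, e1, h.vertex_zero, h.vertex_one, hedge]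
    grind
  · rw [reflectMat_self, h.vertex_one]
  · rw [reflectMat_diag q h12, e2, h.vertex_two, h.vertex_one, h.edge_one_two]
    simp
  · rw [qtil_comm, qtil_reflectMat_self q h10, e1, h.vertex_one, hedge]
    grind
  · rw [qtil_reflectMat q h10 h12, e1, e2, h.edge_zero_two, h.edge_one_two]
    simp
  · rw [qtil_reflectMat_self q h12, e2, h.edge_one_two]
    simp

lemma reflect_two (hζ : IsPrimitiveRoot ζ 3) (h : IsStarDiagram ζ q) :
    IsStarDiagram ζ (reflectMat q 2) := by
  have hζ2 := quadratic_of_isPrimitiveRoot_three hζ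
  have hζ0 := hζ.ne_zero (by norm_num)
  obtain ⟨e1, e2⟩ := h.cartanNum_two hζ
  have h20 : (2 : Fin 3) ≠ 0 := by decide
  have h21 : (2 : Fin 3) ≠ 1 := by decide
  have hedge : qtil q 2 0 = -ζ := qtil_comm q 2 0 ▸ h.edge_zero_two
  have hedge' : qtil q 2 1 = 1 := qtil_comm q 2 1 ▸ h.edge_one_two
  constructor
  · rw [reflectMat_diag q h20, e1, h.vertex_zero, h.vertex_two, hedge]
    grind
  · rw [reflectMat_diag q h21, e2, h.vertex_one, h.vertex_two, hedge']
    simp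
  · rw [reflectMat_self, h.vertex_two]
  · rw [qtil_reflectMat q h20 h21, e1, e2, h.edge_zero_one, hedge']
    simp
  · rw [qtil_comm, qtil_reflectMat_self q h20, e1, h.vertex_two, hedge]
    grind
  · rw [qtil_comm, qtil_reflectMat_self q h21, e2, hedge']
    simp

lemma sRefl_zero (hζ : IsPrimitiveRoot ζ 3) (h : IsStarDiagram ζ q) (x y z : ℤ) :
    sRefl q 0 ![x, y, z] = ![2 * y + 2 * z - x, y, z] := by
  obtain ⟨e1, e2⟩ := h.cartanNum_zero hζ
  ext k
  fin_cases k
  · simp [sRefl, Fin.sum_univ_three, cij_self, cij_of_ne, e1, e2]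
    ring
  all_goals simp [sRefl]

lemma sRefl_one (hζ : IsPrimitiveRoot ζ 3) (h : IsStarDiagram ζ q) (x y z : ℤ) :
    sRefl q 1 ![x, y, z] = ![x, x - y, z] := by
  obtain ⟨e1, e2⟩ := h.cartanNum_one hζ
  ext k
  fin_cases k
  · simp [sRefl]
  · simp [sRefl, Fin.sum_univ_three, cij_self, cij_of_ne, e1, e2]
    ring
  · simp [sRefl]

lemma sRefl_two (hζ : IsPrimitiveRoot ζ 3) (h : IsStarDiagram ζ q) (x y z : ℤ) :
    sRefl q 2 ![x, y, z] = ![x, y, x - z] := by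
  obtain ⟨e1, e2⟩ := h.cartanNum_two hζ
  ext k
  fin_cases k
  · simp [sRefl]
  · simp [sRefl]
  · simp [sRefl, Fin.sum_univ_three, cij_self, cij_of_ne, e1, e2]
    ring

lemma exists_reachRoot (hζ : IsPrimitiveRoot ζ 3) (h : IsStarDiagram ζ q) (n : ℕ) :
    ∃ q', ReachRoot q q' ![2 * n + 1, n, n] ∧ IsStarDiagram ζ q' := by
  induction n with
  | zero =>
    refine ⟨q, ?_, h⟩
    convert ReachRoot.simple (0 : Fin 3) using 1
    ext k
    fin_cases k <;> simp
  | succ n ih =>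
    obtain ⟨q', hr, hq⟩ := ih
    have hq1 := hq.reflect_one hζ
    have hq2 := hq1.reflect_two hζ
    refine ⟨_, ?_, hq2.reflect_zero hζ⟩
    convert ((hr.reflect 1).reflect 2).reflect 0 using 1
    rw [hq.sRefl_one hζ, hq1.sRefl_two hζ, hq2.sRefl_zero hζ]
    ext k
    fin_cases k <;> simp <;> ring

theorem not_finiteRootSystem (hζ : IsPrimitiveRoot ζ 3) (h : IsStarDiagram ζ q) :
    ¬FiniteRootSystem q := by
  rintro ⟨-, hfin⟩
  obtain ⟨M, hM⟩ := (hfin.image fun β => β 1).bddAbove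
  obtain ⟨q', hr, -⟩ := h.exists_reachRoot hζ (M.toNat + 1)
  have hle : ((M.toNat + 1 : ℕ) : ℤ) ≤ M := hM ⟨_, ⟨q', hr⟩, rfl⟩
  have := Int.self_le_toNat M
  lia

end IsStarDiagram

end RankThree

section Homogeneity

variable {θ : ℕ} {q : Fin θ → Fin θ → ℂˣ}

lemma sum_δ (i : Fin θ) : ∑ l, δ θ i l = 1 := by
  simp [δ]

lemma sum_degW (w : List (Fin θ)) : ∑ l, degW θ w l = w.length := by
  induction w with
  | nil => simp [degW_nil]
  | cons a w ih =>
    simp only [degW_cons, Pi.add_apply, Finset.sum_add_distrib, sum_δ, ih, List.length_cons,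
      add_comm]

lemma homogD_le_homogTot (e : Fin θ → ℕ) : homogD θ e ≤ homogTot θ (∑ l, e l) := by
  refine Submodule.span_mono ?_
  rintro _ ⟨w, rfl, rfl⟩
  exact ⟨w, (sum_degW w).symm, rfl⟩

lemma degW_append (v w : List (Fin θ)) : degW θ (v ++ w) = degW θ v + degW θ w :=
  funext fun _ => List.count_append

lemma mul_mem_homogD {d e : Fin θ → ℕ} {u v : TV θ} (hu : u ∈ homogD θ d) (hv : v ∈ homogD θ e) :
    u * v ∈ homogD θ (d + e) := by
  have h := Submodule.mul_mem_mul hu hv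
  rw [homogD, homogD, Submodule.span_mul_span] at h
  refine Submodule.span_mono ?_ h
  rintro _ ⟨_, ⟨v, rfl, rfl⟩, _, ⟨w, rfl, rfl⟩, rfl⟩
  exact ⟨v ++ w, degW_append v w, (wordElem_append v w).symm⟩

lemma brk_mem_homogD {d e : Fin θ → ℕ} {u v : TV θ} (hu : u ∈ homogD θ d) (hv : v ∈ homogD θ e) :
    brk q d e u v ∈ homogD θ (d + e) :=
  sub_mem (mul_mem_homogD hu hv)
    (Submodule.smul_mem _ _ (add_comm e d ▸ mul_mem_homogD hv hu))

lemma xw_mem_homogD {w : List (Fin θ)} {e : Fin θ → ℕ} (h : degW θ w = e) :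
    xw q w ∈ homogD θ e := by
  induction w generalizing e with
  | nil => exact Submodule.subset_span ⟨[], h, rfl⟩
  | cons a w ih =>
    subst h
    cases w with
    | nil => simpa [xw, degW_cons, degW_nil] using gen_mem_homogD a
    | cons b w => rw [degW_cons]; exact brk_mem_homogD (gen_mem_homogD a) (ih rfl)

end Homogeneity

section PrimitiveElements

variable {θ : ℕ} {q : Fin θ → Fin θ → ℂˣ}

lemma isPrimitiveIn_gen_pow_three (S : BraidedStr θ q) {i : Fin θ}
    (hζ : IsPrimitiveRoot (q i i : ℂ) 3) : IsPrimitiveIn S (gen θ i ^ 3) := by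
  simp only [pow_three, IsPrimitiveIn, Δ_gen_mul, S.Δ_gen, map_add, map_smul, map_mul, map_one,
    primMul_tmul, twist_gen, qf_single, mul_one, ← TensorProduct.smul_tmul', smul_mul_assoc,
    mul_smul_comm]
  have h := quadratic_of_isPrimitiveRoot_three hζ
  match_scalars <;> grind

/-- The primitive element of degree `2α_i + α_j + α_k` whose braided commutator with `x_i` is,
up to multiples of `x_i³`, twice the relation to be proved. -/
def primElt (q : Fin θ → Fin θ → ℂˣ) (i j k : Fin θ) : TV θ :=
  (2 + q i i : ℂ) •
      (brk q (δ θ i + δ θ j) (δ θ i + δ θ k) (xw q [i, j]) (xw q [i, k]) -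
        (q j k * q i k * q j i : ℂ) • (xw q [i, k] * xw q [i, j])) -
    (q i i * q j i : ℂ) • brk q (δ θ i + δ θ i + δ θ j) (δ θ k) (xw q [i, i, j]) (gen θ k) +
    (3 * q i i * q j i * q j k : ℂ) •
      brk q (δ θ i + δ θ i + δ θ k) (δ θ j) (xw q [i, i, k]) (gen θ j)

lemma primElt_mem_homogD (i j k : Fin θ) :
    primElt q i j k ∈ homogD θ (δ θ i + δ θ j + (δ θ i + δ θ k)) := by
  have hpair (l : Fin θ) : xw q [i, l] ∈ homogD θ (δ θ i + δ θ l) :=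
    xw_mem_homogD (by simp [degW_cons, degW_nil])
  have htriple (l : Fin θ) : xw q [i, i, l] ∈ homogD θ (δ θ i + δ θ i + δ θ l) :=
    xw_mem_homogD (by simp [degW_cons, degW_nil, add_assoc])
  refine add_mem (sub_mem (Submodule.smul_mem _ _ (sub_mem (brk_mem_homogD (hpair j) (hpair k))
    (Submodule.smul_mem _ _ ?_))) (Submodule.smul_mem _ _ ?_)) (Submodule.smul_mem _ _ ?_)
  · rw [add_comm (δ θ i + δ θ j)]
    exact mul_mem_homogD (hpair k) (hpair j)
  · convert brk_mem_homogD (htriple j) (gen_mem_homogD k) using 2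
    abel
  · convert brk_mem_homogD (htriple k) (gen_mem_homogD j) using 2
    abel

lemma coe_eq_qtil_div (q : Fin θ → Fin θ → ℂˣ) (i j : Fin θ) : (q j i : ℂ) = qtil q i j / q i j :=
  (mul_div_cancel_left₀ _ (q i j).ne_zero).symm

set_option maxHeartbeats 400000 in
-- The coproduct of `primElt` expands into a long sum of tensors of monomials.
lemma isPrimitiveIn_primElt (S : BraidedStr θ q) {i j k : Fin θ}
    (hζ : IsPrimitiveRoot (q i i : ℂ) 3) (hij : qtil q i j = q i i) (hik : qtil q i k = -q i i)
    (hjk : qtil q j k = 1) : IsPrimitiveIn S (primElt q i j k) := by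
  have h := quadratic_of_isPrimitiveRoot_three hζ
  have ha := (q i j).ne_zero
  have hb := (q i k).ne_zero
  have hc := (q j k).ne_zero
  simp only [IsPrimitiveIn, primElt, brk, xw, ad1, degW_cons, degW_nil, add_zero, qf_add_left,
    qf_add_right, qf_single, coe_eq_qtil_div q i j, coe_eq_qtil_div q i k, coe_eq_qtil_div q j k,
    hij, hik, hjk, mul_sub, sub_mul, smul_mul_assoc, mul_smul_comm, mul_assoc, map_add, map_sub,
    map_smul, map_mul, map_one, Δ_gen_mul, S.Δ_gen, primMul_tmul, twist_gen, mul_one, smul_sub,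
    smul_add, TensorProduct.add_tmul, TensorProduct.sub_tmul, TensorProduct.tmul_add,
    TensorProduct.tmul_sub, TensorProduct.tmul_smul, ← TensorProduct.smul_tmul']
  generalize (q i i : ℂ) = ζ, (q i j : ℂ) = a, (q i k : ℂ) = b, (q j k : ℂ) = c at *
  match_scalars <;> field_simp <;> grind

lemma two_smul_relator {i j k : Fin θ} (hζ : IsPrimitiveRoot (q i i : ℂ) 3)
    (hij : qtil q i j = q i i) (hik : qtil q i k = -q i i) (hjk : qtil q j k = 1) :
    (2 : ℂ) • (brk q (δ θ i) (δ θ i + δ θ j + (δ θ i + δ θ k)) (gen θ i)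
        (brk q (δ θ i + δ θ j) (δ θ i + δ θ k) (xw q [i, j]) (xw q [i, k])) +
      ((q j k : ℂ) * (q i k : ℂ) * (q j i : ℂ)) •
        brk q (δ θ i + δ θ i + δ θ k) (δ θ i + δ θ j) (xw q [i, i, k]) (xw q [i, j]) +
      (q i j : ℂ) • (xw q [i, j] * xw q [i, i, k])) =
    brk q (δ θ i) (δ θ i + δ θ j + (δ θ i + δ θ k)) (gen θ i) (primElt q i j k) +
      (q i i * q j i : ℂ) •
        brk q (δ θ i + δ θ i + δ θ i + δ θ j) (δ θ k) (xw q [i, i, i, j]) (gen θ k) -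
      (3 * q i i * q j i * q j k : ℂ) •
        brk q (δ θ i + δ θ i + δ θ i + δ θ k) (δ θ j) (xw q [i, i, i, k]) (gen θ j) := by
  have h := quadratic_of_isPrimitiveRoot_three hζ
  have ha := (q i j).ne_zero
  have hb := (q i k).ne_zero
  have hc := (q j k).ne_zero
  simp only [primElt, brk, xw, ad1, degW_cons, degW_nil, add_zero, qf_add_left, qf_add_right,
    qf_single, coe_eq_qtil_div q i j, coe_eq_qtil_div q i k, coe_eq_qtil_div q j k, hij, hik, hjk,
    mul_add, add_mul, mul_sub, sub_mul, smul_mul_assoc, mul_smul_comm, mul_assoc]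
  generalize (q i i : ℂ) = ζ, (q i j : ℂ) = a, (q i k : ℂ) = b, (q j k : ℂ) = c at *
  match_scalars <;> field_simp <;> grind

lemma xw_iiij_eq {i j : Fin θ} (hζ : IsPrimitiveRoot (q i i : ℂ) 3) :
    xw q [i, i, i, j] = gen θ i ^ 3 * gen θ j - (q i j : ℂ) ^ 3 • (gen θ j * gen θ i ^ 3) := by
  have h := quadratic_of_isPrimitiveRoot_three hζ
  simp only [pow_three, brk, xw, ad1, degW_cons, degW_nil, add_zero, qf_add_right, qf_single,
    mul_sub, sub_mul, smul_mul_assoc, mul_smul_comm, mul_assoc]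
  match_scalars <;> grind

end PrimitiveElements

section Membership

variable {θ : ℕ} {q : Fin θ → Fin θ → ℂˣ} {S : BraidedStr θ q} {I : Submodule ℂ (TV θ)}

lemma one_mem_homogTot (θ : ℕ) : (1 : TV θ) ∈ homogTot θ 0 := by
  simpa using wordElem_mem_homogTot (θ := θ) (w := []) rfl

lemma gen_mem_homogTot (a : Fin θ) : gen θ a ∈ homogTot θ 1 := by
  simpa [wordElem_singleton] using wordElem_mem_homogTot (θ := θ) (w := [a]) rfl

lemma linearIndependent_gen (θ : ℕ) : LinearIndependent ℂ (gen θ) := by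
  have h := (wordBasis θ).linearIndependent.comp (fun a : Fin θ => [a])
    fun _ _ h => by simpa using h
  simpa [Function.comp_def, wordBasis_apply, wordElem_singleton] using h

lemma proj_eq_zero_of_mem (hI : IsPreNicholsIdeal S I) {n : ℕ} (hn : n < 2) {t : TV θ}
    (ht : t ∈ I) : proj θ n t = 0 := by
  suffices I ≤ LinearMap.ker (proj θ n) from this ht
  rw [hI.homog_ge2]
  refine Submodule.span_le.2 ?_
  rintro x ⟨-, m, hm, hx⟩
  exact proj_of_mem_homogTot_of_ne hx (by omega)

lemma degBraiding_δ (q : Fin θ → Fin θ → ℂˣ) {m : ℕ} (f : Fin m → Fin θ) :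
    degBraiding q (fun a => δ θ (f a)) = fun a b => q (f a) (f b) := by
  ext a b
  exact qf_single q (f a) (f b)

lemma finiteRootSystem_comp (hAAH : AAH) (hI : IsPreNicholsIdeal S I) (hGK : FinGK I) {m : ℕ}
    {f : Fin m → Fin θ} (hf : Function.Injective f) :
    FiniteRootSystem (fun a b => q (f a) (f b)) := by
  rw [← degBraiding_δ]
  refine finiteRootSystem_degBraiding hAAH hI hGK (fun a => gen_mem_homogD (f a))
    (fun a => S.Δ_gen (f a)) (disjoint_Wfil_one_relations fun c g h => ?_)
  have hg : ∑ a, g a • gen θ (f a) ∈ homogTot θ 1 :=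
    sum_mem fun a _ => Submodule.smul_mem _ _ (gen_mem_homogTot _)
  have h0 := proj_eq_zero_of_mem hI zero_lt_two h
  have h1 := proj_eq_zero_of_mem hI one_lt_two h
  rw [map_add, map_smul, proj_of_mem_homogTot (one_mem_homogTot θ),
    proj_of_mem_homogTot_of_ne hg one_ne_zero, add_zero] at h0
  rw [map_add, map_smul, proj_of_mem_homogTot_of_ne (one_mem_homogTot θ) zero_ne_one,
    proj_of_mem_homogTot hg, smul_zero, zero_add] at h1
  exact ⟨(smul_eq_zero.1 h0).resolve_right one_ne_zero, funext <|
    Fintype.linearIndependent_iff.1 ((linearIndependent_gen θ).comp f hf) g h1⟩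

lemma finiteRootSystem_gen_pair (hAAH : AAH) (hI : IsPreNicholsIdeal S I) (hGK : FinGK I)
    (a : Fin θ) {y : TV θ} {e : Fin θ → ℕ} (he : 2 ≤ ∑ l, e l) (hye : y ∈ homogD θ e)
    (hp : IsPrimitiveIn S y) (hy : y ∉ I) : FiniteRootSystem (degBraiding q ![δ θ a, e]) := by
  refine finiteRootSystem_degBraiding hAAH hI hGK (y := ![gen θ a, y])
    (Fin.forall_fin_two.2 ⟨gen_mem_homogD a, hye⟩) (Fin.forall_fin_two.2 ⟨S.Δ_gen a, hp⟩)
    (disjoint_Wfil_one_relations fun c g h => ?_)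
  simp only [Fin.sum_univ_two, Matrix.cons_val_zero, Matrix.cons_val_one] at h
  have hyn := homogD_le_homogTot e hye
  have h0 := proj_eq_zero_of_mem hI zero_lt_two h
  have h1 := proj_eq_zero_of_mem hI one_lt_two h
  simp only [map_add, map_smul, proj_of_mem_homogTot (one_mem_homogTot θ),
    proj_of_mem_homogTot_of_ne (gen_mem_homogTot a) one_ne_zero,
    proj_of_mem_homogTot_of_ne hyn (show ∑ l, e l ≠ 0 by omega), smul_zero, add_zero] at h0
  simp only [map_add, map_smul, proj_of_mem_homogTot_of_ne (one_mem_homogTot θ) zero_ne_one,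
    proj_of_mem_homogTot (gen_mem_homogTot a),
    proj_of_mem_homogTot_of_ne hyn (show ∑ l, e l ≠ 1 by omega), smul_zero, add_zero,
    zero_add] at h1
  have hc : c = 0 := (smul_eq_zero.1 h0).resolve_right one_ne_zero
  have hg0 : g 0 = 0 := (smul_eq_zero.1 h1).resolve_right ((linearIndependent_gen θ).ne_zero a)
  rw [hc, hg0, zero_smul, zero_smul, zero_add, zero_add] at h
  have hg1 : g 1 = 0 := by_contra fun hne => hy ((Submodule.smul_mem_iff _ hne).1 h)
  exact ⟨hc, funext (Fin.forall_fin_two.2 ⟨hg0, hg1⟩)⟩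

end Membership

section Relation

variable {θ : ℕ} {q : Fin θ → Fin θ → ℂˣ} {S : BraidedStr θ q} {I : Submodule ℂ (TV θ)}

lemma brk_mem_right (hI : IsPreNicholsIdeal S I) (d e : Fin θ → ℕ) (u : TV θ) {v : TV θ}
    (hv : v ∈ I) : brk q d e u v ∈ I :=
  sub_mem (hI.mul_left u v hv) (Submodule.smul_mem _ _ (hI.mul_right u v hv))

lemma brk_mem_left (hI : IsPreNicholsIdeal S I) (d e : Fin θ → ℕ) {u : TV θ} (hu : u ∈ I)
    (v : TV θ) : brk q d e u v ∈ I :=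
  sub_mem (hI.mul_right v u hu) (Submodule.smul_mem _ _ (hI.mul_left v u hu))

lemma gen_pow_three_mem_homogD (i : Fin θ) :
    gen θ i ^ 3 ∈ homogD θ (δ θ i + (δ θ i + δ θ i)) := by
  rw [pow_three]
  exact mul_mem_homogD (gen_mem_homogD i) (mul_mem_homogD (gen_mem_homogD i) (gen_mem_homogD i))

lemma gen_pow_three_mem (hAAH : AAH) (hI : IsPreNicholsIdeal S I) (hGK : FinGK I) {i k : Fin θ}
    (hζ : IsPrimitiveRoot (q i i : ℂ) 3) (hik : qtil q i k = -q i i) : gen θ i ^ 3 ∈ I := by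
  by_contra hy
  set e := δ θ i + (δ θ i + δ θ i) with he
  have hfin := finiteRootSystem_gen_pair hAAH hI hGK k (by simp [Finset.sum_add_distrib, sum_δ])
    (gen_pow_three_mem_homogD i) (isPrimitiveIn_gen_pow_three S hζ) hy
  have h3 := hζ.pow_eq_one
  have hvertex : (degBraiding q ![δ θ k, e] 1 1 : ℂ) = 1 := by
    simp only [he, degBraiding, Units.val_mk0, Matrix.cons_val_one, Matrix.cons_val_zero,
      qf_add_left, qf_add_right, qf_single]
    grind
  have hedge : qtil (degBraiding q ![δ θ k, e]) 1 0 = -1 := by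
    simp only [he, qtil, degBraiding, Units.val_mk0, Matrix.cons_val_one, Matrix.cons_val_zero,
      qf_add_left, qf_add_right, qf_single]
    calc _ = qtil q i k ^ 3 := by rw [qtil]; ring
      _ = -1 := by rw [hik, Odd.neg_pow (by decide), h3]
  obtain ⟨n, hn⟩ := hfin.1 _ 1 ⟨_, ReachRoot.simple 0⟩ 0 (by decide)
  rw [cSet_eq, hvertex, hedge, mem_cartanSet] at hn
  norm_num at hn

lemma injective_of_qtil {i j k : Fin θ} (hζ : IsPrimitiveRoot (q i i : ℂ) 3)
    (hij : qtil q i j = q i i) (hik : qtil q i k = -q i i) : Function.Injective ![i, j, k] := by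
  have hζ2 := quadratic_of_isPrimitiveRoot_three hζ
  have hne_ij : i ≠ j := by
    rintro rfl
    rw [qtil] at hij
    grind
  have hne_ik : i ≠ k := by
    rintro rfl
    rw [qtil] at hik
    grind
  have hne_jk : j ≠ k := by
    rintro rfl
    grind
  intro a b
  fin_cases a <;> fin_cases b <;>
    simp [hne_ij, hne_ij.symm, hne_ik, hne_ik.symm, hne_jk, hne_jk.symm]

lemma qtil_degBraiding_primElt {i j k : Fin θ} (hζ : IsPrimitiveRoot (q i i : ℂ) 3)
    (hij : qtil q i j = q i i) (hik : qtil q i k = -q i i) :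
    qtil (degBraiding q ![δ θ i, δ θ i + δ θ j + (δ θ i + δ θ k)]) 0 1 = -1 := by
  have h3 := hζ.pow_eq_one
  simp only [qtil, degBraiding, Units.val_mk0, Matrix.cons_val_one, Matrix.cons_val_zero,
    qf_add_left, qf_add_right, qf_single]
  calc _ = (q i i : ℂ) ^ 4 * qtil q i j * qtil q i k := by rw [qtil, qtil]; ring
    _ = -1 := by rw [hij, hik]; grind

lemma degBraiding_primElt {i j k : Fin θ} (hζ : IsPrimitiveRoot (q i i : ℂ) 3)
    (hij : qtil q i j = q i i) (hik : qtil q i k = -q i i) (hjk : qtil q j k = 1) :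
    (degBraiding q ![δ θ i, δ θ i + δ θ j + (δ θ i + δ θ k)] 1 1 : ℂ)
      = q j j * q k k * q i i ^ 2 := by
  have h3 := hζ.pow_eq_one
  simp only [degBraiding, Units.val_mk0, Matrix.cons_val_one, Matrix.cons_val_zero,
    qf_add_left, qf_add_right, qf_single]
  calc _ = (q i i : ℂ) ^ 4 * qtil q i j ^ 2 * qtil q i k ^ 2 * qtil q j k * (q j j * q k k) := by
        simp only [qtil]; ring
    _ = q j j * q k k * q i i ^ 2 := by rw [hij, hik, hjk]; grind

lemma primElt_mem (hAAH : AAH) (hI : IsPreNicholsIdeal S I) (hGK : FinGK I) {i j k : Fin θ}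
    (hζ : IsPrimitiveRoot (q i i : ℂ) 3) (hij : qtil q i j = q i i) (hik : qtil q i k = -q i i)
    (hjk : qtil q j k = 1) : primElt q i j k ∈ I := by
  by_contra hy
  have hfin := finiteRootSystem_gen_pair hAAH hI hGK i
    (by simp [Finset.sum_add_distrib, sum_δ]) (primElt_mem_homogD i j k)
    (isPrimitiveIn_primElt S hζ hij hik hjk) hy
  have hinj := injective_of_qtil hζ hij hik
  have hj : (q j j : ℂ) = -1 ∨ (q j j : ℂ) = q i i ^ 2 :=
    label_of_finiteRootSystem_zeta_zeta hζ rfl hij <|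
      finiteRootSystem_comp hAAH hI hGK (hinj.comp (show Function.Injective ![0, 1] by decide))
  have hk : (q k k : ℂ) = -1 ∨ (q k k : ℂ) = -q i i ^ 2 :=
    label_of_finiteRootSystem_zeta_neg_zeta hζ rfl hik <|
      finiteRootSystem_comp hAAH hI hGK (hinj.comp (show Function.Injective ![0, 2] by decide))
  have h3 := hζ.pow_eq_one
  have hvertex : (degBraiding q ![δ θ i, δ θ i + δ θ j + (δ θ i + δ θ k)] 0 0 : ℂ) = q i i :=
    qf_single q i i
  have hedge := qtil_degBraiding_primElt hζ hij hik
  have hvertex' := degBraiding_primElt hζ hij hik hjk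
  rcases hj with hj | hj <;> rcases hk with hk | hk <;> rw [hj, hk] at hvertex'
  · exact not_finiteRootSystem_of_pow_nine (by grind) (by grind) (by grind) hfin
  · exact not_finiteRootSystem_of_pow_nine (by grind) (by grind) (by grind) hfin
  · exact not_finiteRootSystem_of_zeta_neg_one_neg_zeta hζ hvertex hedge (by grind) hfin
  · exact IsStarDiagram.not_finiteRootSystem hζ ⟨rfl, hj, hk, hij, hik, hjk⟩
      (finiteRootSystem_comp hAAH hI hGK hinj)

lemma xw_iiij_mem (hAAH : AAH) (hI : IsPreNicholsIdeal S I) (hGK : FinGK I) {i k : Fin θ}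
    (hζ : IsPrimitiveRoot (q i i : ℂ) 3) (hik : qtil q i k = -q i i) (j : Fin θ) :
    xw q [i, i, i, j] ∈ I := by
  have h := gen_pow_three_mem hAAH hI hGK hζ hik
  rw [xw_iiij_eq hζ]
  exact sub_mem (hI.mul_right _ _ h) (Submodule.smul_mem _ _ (hI.mul_left _ _ h))

theorem statement_12_general (hAAH : AAH) (hI : IsPreNicholsIdeal S I) (hGK : FinGK I)
    {i j k : Fin θ} (hjk : qtil q j k = 1) (hζ : IsPrimitiveRoot (q i i : ℂ) 3)
    (hij : (q i i : ℂ) = qtil q i j) (hik : (q i i : ℂ) = -qtil q i k) :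
    brk q (δ θ i) (δ θ i + δ θ j + (δ θ i + δ θ k)) (gen θ i)
        (brk q (δ θ i + δ θ j) (δ θ i + δ θ k) (xw q [i, j]) (xw q [i, k])) +
      ((q j k : ℂ) * (q i k : ℂ) * (q j i : ℂ)) •
        brk q (δ θ i + δ θ i + δ θ k) (δ θ i + δ θ j) (xw q [i, i, k]) (xw q [i, j]) +
      (q i j : ℂ) • (xw q [i, j] * xw q [i, i, k]) ∈ I := by
  replace hij := hij.symm
  replace hik : qtil q i k = -q i i := by rw [hik, neg_neg]
  refine (Submodule.smul_mem_iff I (two_ne_zero (α := ℂ))).1 ?_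
  rw [two_smul_relator hζ hij hik hjk]
  have hP := primElt_mem hAAH hI hGK hζ hij hik hjk
  have hcube (l : Fin θ) := xw_iiij_mem hAAH hI hGK hζ hik l
  exact sub_mem (add_mem (brk_mem_right hI _ _ _ hP)
    (Submodule.smul_mem _ _ (brk_mem_left hI _ _ (hcube j) _)))
    (Submodule.smul_mem _ _ (brk_mem_left hI _ _ (hcube k) _))

end Relation

/-- Lemma 3.8: if `q̃_{jk} = 1` and `q_{ii} = q̃_{ij} = -q̃_{ik} ∈ G₃'`,
then `[x_i,[x_{ij},x_{ik}]_c]_c = -q_{jk}q_{ik}q_{ji}[x_{iik},x_{ij}]_c - q_{ij}x_{ij}x_{iik}`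
in every finite-GKdim pre-Nichols algebra of `q`. -/
theorem statement_12 (θ : ℕ) (q : Fin θ → Fin θ → ℂˣ) (S : BraidedStr θ q)
    (hconn : (dynkin q).Connected)
    (hfd : FiniteDimensional ℂ (TV θ ⧸ Jq S))
    (hAAH : AAH)
    (I : Submodule ℂ (TV θ)) (hI : IsPreNicholsIdeal S I) (hGK : FinGK I)
    (i j k : Fin θ) (hij : i ≠ j) (hik : i ≠ k) (hjk : j ≠ k)
    (h1 : qtil q j k = 1)
    (h2 : IsPrimitiveRoot (q i i : ℂ) 3)
    (h3 : (q i i : ℂ) = qtil q i j)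
    (h4 : (q i i : ℂ) = -(qtil q i k)) :
    brk q (δ θ i) (δ θ i + δ θ j + (δ θ i + δ θ k)) (gen θ i)
        (brk q (δ θ i + δ θ j) (δ θ i + δ θ k) (xw q [i, j]) (xw q [i, k])) +
      ((q j k : ℂ) * (q i k : ℂ) * (q j i : ℂ)) •
        brk q (δ θ i + δ θ i + δ θ k) (δ θ i + δ θ j) (xw q [i, i, k]) (xw q [i, j]) +
      (q i j : ℂ) • (xw q [i, j] * xw q [i, i, k]) ∈ I := by
  exact statement_12_general hAAH hI hGK h1 h2 h3 h4

end PreNicholsPaper
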